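/- Let n ≥ 2 and p, q > 1, and let μ be a nonzero finite even Borel measure on S^{n-1} (i.e. μ is invariant under the antipodal map u ↦ −u). Write |μ| = μ(S^{n-1}) and define Φ(K) = −(1/(p|μ|)) ∫_{S^{n-1}} h_K(v)^p dμ(v) for K ∈ K_e^n. Suppose K₀ ∈ K_e^n satisfies Ṽ_{γ_n,q}(K₀) = |μ| and Φ(K₀) ≥ Φ(K) for every K ∈ K_e^n with Ṽ_{γ_n,q}(K) = |μ|. Then for every outer unit normal selection ν for K₀ and every Borel set η ⊆ S^{n-1}, μ(η) · C̃_{p,γ_n,q}(K₀, S^{n-1}) = |μ| · C̃_{p,γ_n,q}(K₀, η); that is, μ/|μ| = C̃_{p,γ_n,q}(K₀,·)/|C̃_{p,γ_n,q}(K₀,·)|. -/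

import Mathlib

open MeasureTheory Metric Set Filter
open scoped RealInnerProductSpace ENNReal Pointwise Topology

/-- The support function of a set `K`. -/
noncomputable def supportFn {n : ℕ} (K : Set (EuclideanSpace ℝ (Fin n)))
    (v : EuclideanSpace ℝ (Fin n)) : ℝ :=
  sSup ((fun y => ⟪y, v⟫) '' K)

/-- The Gaussian dual quermassintegral `Ṽ_{γ_n,q}(K) = ∫_K e^{-|x|²/2} |x|^{q-n} dx`. -/
noncomputable def gaussDualQuermass (n : ℕ) (q : ℝ)
    (K : Set (EuclideanSpace ℝ (Fin n))) : ℝ :=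
  ∫ x in K, Real.exp (-‖x‖ ^ 2 / 2) * ‖x‖ ^ (q - (n : ℝ))

/-- The `L_p` Gaussian dual curvature measure of `K` (with respect to an outer unit normal
selection `ν`), evaluated at the Borel set `η ⊆ Sⁿ⁻¹`. -/
noncomputable def lpGaussDualCurv (n : ℕ) (p q : ℝ) (K : Set (EuclideanSpace ℝ (Fin n)))
    (ν : EuclideanSpace ℝ (Fin n) → EuclideanSpace ℝ (Fin n))
    (η : Set (EuclideanSpace ℝ (Fin n))) : ℝ≥0∞ :=
  ∫⁻ x in frontier K ∩ ν ⁻¹' η,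
    ENNReal.ofReal (⟪x, ν x⟫ ^ (1 - p) * ‖x‖ ^ (q - (n : ℝ)) * Real.exp (-‖x‖ ^ 2 / 2))
    ∂(μH[(n : ℝ) - 1])

/-- The functional `Φ(K) = -(1/(p|μ|)) ∫_{Sⁿ⁻¹} h_K(v)^p dμ(v)`. -/
noncomputable def PhiFunc (n : ℕ) (p : ℝ) (μ : Measure (EuclideanSpace ℝ (Fin n)))
    (K : Set (EuclideanSpace ℝ (Fin n))) : ℝ :=
  -(1 / (p * (μ Set.univ).toReal)) * ∫ v, supportFn K v ^ p ∂μ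

/-!
Measure bodies by `∫_K ω` with `ω x = e^{-|x|²/2} |x|^{q-n}`. Let `h` be the support function of the
symmetric body `K`, and let `S` be the image under the normal selection `ν` of the surface measure
`ω dℋⁿ⁻¹` of `∂K`. For an even continuous `f`, the Wulff shape of `h + t f` is a symmetric body, and
rescaling it to the size of `K` makes it a competitor for `K`. If `∫ f dS > 0`, then the Wulff shape
is larger than `K` for small `t > 0`, the rescaling is a contraction, and the optimality of `K`
yields `0 ≤ ∫ f h^{p-1} dμ`. Two continuous linear functionals related in this way are proportional,
so `h^{p-1} μ = c S`, which is the assertion since `h (ν x) = ⟪x, ν x⟫`.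

Only a lower bound for the first variation of `∫_K ω` is needed. It comes from polar coordinates and
a Fatou argument, and is first expressed through the cone-volume measure
`A ↦ vol {r x | 0 < r ≤ 1, x ∈ A}` of `∂K`. That measure is a constant multiple of
`⟪x, ν x⟫ dℋⁿ⁻¹`: a small piece of `∂K` is nearly flat, and over a hyperplane both measures are
proportional by translation invariance.
-/

/-! ### Comparison and convergence of measures -/

theorem measure_le_of_locally_le {X : Type*} [TopologicalSpace X] [SecondCountableTopology X]
    [MeasurableSpace X] [OpensMeasurableSpace X] {M₁ M₂ : Measure X} {s : Set X}
    (hs : MeasurableSet s) (hM : M₁ sᶜ = 0)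
    (h : ∀ x ∈ s, ∃ U ∈ 𝓝[s] x, ∀ A ⊆ U, MeasurableSet A → M₁ A ≤ M₂ A) : M₁ ≤ M₂ := by
  have hopen : ∀ x ∈ s, ∃ V, x ∈ V ∧ IsOpen V ∧ ∀ A ⊆ V ∩ s, MeasurableSet A → M₁ A ≤ M₂ A := by
    intro x hx
    obtain ⟨U, hU, hle⟩ := h x hx
    obtain ⟨V, hVo, hxV, hVU⟩ := mem_nhdsWithin.1 hU
    exact ⟨V, hxV, hVo, fun A hA => hle A (hA.trans hVU)⟩
  choose! V hxV hVo hle using hopen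
  obtain ⟨t, hts, htc, hcover⟩ := TopologicalSpace.countable_cover_nhdsWithin
    (fun x hx => mem_nhdsWithin_of_mem_nhds ((hVo x hx).mem_nhds (hxV x hx)))
  refine Measure.le_iff.2 fun A hA => ?_
  rcases t.eq_empty_or_nonempty with rfl | htne
  · have hs' : s = ∅ := by simpa using hcover
    have hM₁ : M₁ = 0 := by simpa [hs'] using hM
    simp [hM₁]
  obtain ⟨x, rfl⟩ := htc.exists_eq_range htne
  set D := disjointed fun i => V (x i) with hD
  have hDm : ∀ i, MeasurableSet (A ∩ s ∩ D i) := fun i =>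
    (hA.inter hs).inter (.disjointed (fun j => (hVo _ (hts ⟨j, rfl⟩)).measurableSet) i)
  have hdisj : Pairwise (Function.onFun Disjoint fun i => A ∩ s ∩ D i) := fun i j hij =>
    (disjoint_disjointed _ hij).mono inter_subset_right inter_subset_right
  have hunion : A ∩ s = ⋃ i, A ∩ s ∩ D i := by
    rw [← inter_iUnion, hD, iUnion_disjointed, left_eq_inter]
    exact inter_subset_right.trans (by simpa using hcover)
  calc M₁ A = M₁ (A ∩ s) := (measure_inter_conull hM).symm
    _ = ∑' i, M₁ (A ∩ s ∩ D i) := by rw [← measure_iUnion hdisj hDm, ← hunion]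
    _ ≤ ∑' i, M₂ (A ∩ s ∩ D i) := ENNReal.tsum_le_tsum fun i =>
        hle _ (hts ⟨i, rfl⟩) _
          (fun y hy => ⟨disjointed_subset _ i hy.2, hy.1.2⟩) (hDm i)
    _ = M₂ (A ∩ s) := by rw [← measure_iUnion hdisj hDm, ← hunion]
    _ ≤ M₂ A := measure_mono inter_subset_left

theorem le_of_forall_le_ofReal_pow_mul {a b : ℝ≥0∞} (k : ℕ)
    (h : ∀ c : ℝ, 1 < c → a ≤ ENNReal.ofReal (c ^ k) * b) : a ≤ b := by
  have hlim : Tendsto (fun c : ℝ => ENNReal.ofReal (c ^ k) * b) (𝓝[>] 1) (𝓝 (1 * b)) := by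
    refine ENNReal.Tendsto.mul_const ?_ (.inl one_ne_zero)
    have : ContinuousAt (fun c : ℝ => ENNReal.ofReal (c ^ k)) 1 :=
      ENNReal.continuous_ofReal.continuousAt.comp (continuousAt_id.pow k)
    simpa using this.tendsto.mono_left nhdsWithin_le_nhds
  exact one_mul b ▸ ge_of_tendsto hlim (eventually_mem_nhdsWithin.mono h)

theorem hausdorffMeasure_image_le_ofReal_pow_mul {X Y : Type*} [MetricSpace X] [MeasurableSpace X]
    [BorelSpace X] [MetricSpace Y] [MeasurableSpace Y] [BorelSpace Y] {f : X → Y} {A : Set X}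
    {c : ℝ} (m : ℕ) (hc : 0 ≤ c) (h : ∀ x ∈ A, ∀ y ∈ A, dist (f x) (f y) ≤ c * dist x y) :
    μH[m] (f '' A) ≤ ENNReal.ofReal (c ^ m) * μH[m] A := by
  have hf : LipschitzOnWith c.toNNReal f A := .of_dist_le_mul fun x hx y hy => by
    simpa only [Real.coe_toNNReal c hc] using h x hx y hy
  rw [ENNReal.ofReal_pow hc, ← ENNReal.rpow_natCast]
  exact hf.hausdorffMeasure_image_le m.cast_nonneg

theorem hausdorffMeasure_le_ofReal_pow_mul_image {X Y : Type*} [MetricSpace X] [MeasurableSpace X]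
    [BorelSpace X] [MetricSpace Y] [MeasurableSpace Y] [BorelSpace Y] {f : X → Y} {A : Set X}
    {c : ℝ} (m : ℕ) (hc : 0 ≤ c) (h : ∀ x ∈ A, ∀ y ∈ A, dist x y ≤ c * dist (f x) (f y)) :
    μH[m] A ≤ ENNReal.ofReal (c ^ m) * μH[m] (f '' A) := by
  have hf : AntilipschitzWith c.toNNReal fun x : A => f x := .of_le_mul_dist fun x y => by
    simpa only [Subtype.dist_eq, Real.coe_toNNReal c hc] using h x x.2 y y.2
  have himage := hf.le_hausdorffMeasure_image m.cast_nonneg univ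
  rw [← isometry_subtype_coe.hausdorffMeasure_image (.inl m.cast_nonneg), image_univ,
    Subtype.range_coe, image_univ, ← image_eq_range] at himage
  rwa [ENNReal.ofReal_pow hc, ← ENNReal.rpow_natCast]

theorem eventually_lt_integral_of_ae_eventually_lt {ι α : Type*} [MeasurableSpace α]
    {μ : Measure α} [IsFiniteMeasure μ] {l : Filter ι} [l.IsCountablyGenerated]
    {F : ι → α → ℝ} {g : α → ℝ} {b c : ℝ} (hFint : ∀ᶠ i in l, Integrable (F i) μ)
    (hg : Integrable g μ) (hb : ∀ᶠ i in l, ∀ᵐ y ∂μ, b ≤ F i y)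
    (hF : ∀ᵐ y ∂μ, ∀ a < g y, ∀ᶠ i in l, a < F i y) (hc : c < ∫ y, g y ∂μ) :
    ∀ᶠ i in l, c < ∫ y, F i y ∂μ := by
  have hlim : Tendsto (fun i => ∫ y, min (F i y) (g y) ∂μ) l (𝓝 (∫ y, g y ∂μ)) := by
    refine tendsto_integral_filter_of_dominated_convergence (fun y => |b| + |g y|)
      (hFint.mono fun i hi => (hi.inf hg).aestronglyMeasurable) ?_
      ((integrable_const _).add hg.abs) ?_
    · filter_upwards [hb] with i hi
      filter_upwards [hi] with y hy
      rw [Real.norm_eq_abs, abs_le]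
      constructor
      · rcases min_cases (F i y) (g y) with h | h <;>
          linarith [neg_abs_le b, neg_abs_le (g y), abs_nonneg b, abs_nonneg (g y)]
      · linarith [min_le_right (F i y) (g y), le_abs_self (g y), abs_nonneg b]
    · filter_upwards [hF] with y hy
      refine tendsto_order.2 ⟨fun a ha => (hy a ha).mono fun i hi => lt_min hi ha,
        fun a ha => .of_forall fun i => (min_le_right _ _).trans_lt ha⟩
  filter_upwards [hlim.eventually_const_lt hc, hFint] with i hi hFi
  exact hi.trans_le (integral_mono (hFi.inf hg) hFi fun y => min_le_left _ _)

theorem exists_eq_smul_of_integral_nonneg {X : Type*} [TopologicalSpace X] [MeasurableSpace X]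
    [HasOuterApproxClosed X] [BorelSpace X] {M S : Measure X} [IsFiniteMeasure M]
    [IsFiniteMeasure S] (hS : S ≠ 0)
    (h : ∀ f : BoundedContinuousFunction X ℝ, 0 < ∫ x, f x ∂S → 0 ≤ ∫ x, f x ∂M) :
    ∃ c : NNReal, M = c • S := by
  have hSpos : 0 < S.real univ := by
    simpa [Measure.real, ENNReal.toReal_pos_iff, measure_lt_top, pos_iff_ne_zero] using hS
  have hmean : ∀ f : BoundedContinuousFunction X ℝ,
      M.real univ * ∫ x, f x ∂S ≤ S.real univ * ∫ x, f x ∂M := by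
    intro f
    refine le_of_forall_pos_le_add fun ε hε => ?_
    have hint : ∀ (N : Measure X) [IsFiniteMeasure N] (d : ℝ),
        ∫ x, (S.real univ • f + BoundedContinuousFunction.const X d) x ∂N =
          S.real univ * ∫ x, f x ∂N + N.real univ * d := by
      intro N _ d
      simp [integral_add ((f.integrable N).const_mul _) (integrable_const d),
        integral_const_mul]
    have hMε : M.real univ * (ε / (M.real univ + 1)) ≤ ε := by
      have : 0 ≤ M.real univ := measureReal_nonneg
      rw [mul_div_assoc', div_le_iff₀ (by positivity)]
      nlinarith
    have key := h (S.real univ • f + BoundedContinuousFunction.const X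
      (ε / (M.real univ + 1) - ∫ x, f x ∂S)) (by
        rw [hint S, ← mul_add, add_sub_cancel]
        have : 0 ≤ M.real univ := measureReal_nonneg
        positivity)
    rw [hint M] at key
    linarith
  refine ⟨(M univ).toNNReal / (S univ).toNNReal, ext_of_forall_integral_eq_of_IsFiniteMeasure
    fun f => ?_⟩
  have hle := hmean f
  have hge := hmean (-f)
  simp only [BoundedContinuousFunction.coe_neg, Pi.neg_apply, integral_neg] at hge
  rw [integral_smul_nnreal_measure, NNReal.smul_def, smul_eq_mul, NNReal.coe_div]
  change _ = M.real univ / S.real univ * _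
  rw [div_mul_eq_mul_div, eq_div_iff hSpos.ne']
  linarith

theorem exists_eq_smul_of_integral_nonneg_of_even {E : Type*} [NormedAddCommGroup E]
    [MeasurableSpace E] [BorelSpace E] {M S : Measure E} [IsFiniteMeasure M]
    [IsFiniteMeasure S] (hM : M.map Neg.neg = M) (hS : S.map Neg.neg = S) (hS0 : S ≠ 0)
    (h : ∀ f : BoundedContinuousFunction E ℝ, (∀ x, f (-x) = f x) →
      0 < ∫ x, f x ∂S → 0 ≤ ∫ x, f x ∂M) :
    ∃ c : NNReal, M = c • S := by
  refine exists_eq_smul_of_integral_nonneg hS0 fun f hf => ?_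
  let g : BoundedContinuousFunction E ℝ := f.compContinuous ⟨Neg.neg, continuous_neg⟩
  have hsymm : ∀ (N : Measure E) [IsFiniteMeasure N], N.map Neg.neg = N →
      ∫ x, (f + g) x ∂N = 2 * ∫ x, f x ∂N := by
    intro N _ hN
    have hg : ∫ x, g x ∂N = ∫ x, f x ∂N := by
      conv_rhs => rw [← hN, integral_map measurable_neg.aemeasurable
        f.continuous.aestronglyMeasurable]
      rfl
    simp only [BoundedContinuousFunction.coe_add, Pi.add_apply]
    rw [integral_add (f.integrable N) (g.integrable N), hg, two_mul]
  have hfg := h (f + g) (fun x => by simp [g, add_comm]) (by rw [hsymm S hS]; positivity)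
  rw [hsymm M hM] at hfg
  linarith

theorem add_mul_mem_Icc_half {a b t r R C : ℝ} (hr : 0 < r) (ha : a ∈ Icc r R) (hb : |b| ≤ C)
    (ht : |t| < r / (2 * (|C| + 1))) : a + t * b ∈ Icc (r / 2) (R + r / 2) := by
  have htb : |t * b| ≤ r / 2 := calc
    |t * b| = |t| * |b| := abs_mul _ _
    _ ≤ r / (2 * (|C| + 1)) * (|C| + 1) := by
      gcongr
      linarith [le_abs_self C]
    _ = r / 2 := by field_simp
  rw [abs_le] at htb
  constructor <;> linarith [ha.1, ha.2]

theorem exists_abs_rpow_le_of_mem_Icc {r : ℝ} (hr : 0 < r) (R s : ℝ) :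
    ∃ B, ∀ x ∈ Icc r R, |x ^ s| ≤ B :=
  isCompact_Icc.exists_bound_of_continuousOn fun x hx =>
    (Real.continuousAt_rpow_const x s (.inl (hr.trans_le hx.1).ne')).continuousWithinAt

theorem integrable_rpow_of_ae_mem_Icc {α : Type*} [MeasurableSpace α] {μ : Measure α}
    [IsFiniteMeasure μ] {g : α → ℝ} {r R : ℝ} (hr : 0 < r) (hg : AEStronglyMeasurable g μ)
    (hrR : ∀ᵐ x ∂μ, g x ∈ Icc r R) (s : ℝ) : Integrable (fun x => g x ^ s) μ := by
  obtain ⟨B, hB⟩ := exists_abs_rpow_le_of_mem_Icc hr R s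
  exact .of_bound (hg.aemeasurable.pow_const s).aestronglyMeasurable B (hrR.mono fun x => hB _)

theorem rpow_div_le_rpow_div {x y : ℝ} (hx : 0 < x) (hxy : x ≤ y) (p : ℝ) :
    x ^ p / p ≤ y ^ p / p := by
  rcases le_total 0 p with hp | hp
  · exact div_le_div_of_nonneg_right (Real.rpow_le_rpow hx.le hxy hp) hp
  · exact div_le_div_of_nonpos_of_le hp (Real.rpow_le_rpow_of_nonpos hx hxy hp)

theorem hasDerivAt_integral_add_mul_rpow_div {α : Type*} [MeasurableSpace α] {μ : Measure α}
    [IsFiniteMeasure μ] {h f : α → ℝ} {r R C p : ℝ} (hr : 0 < r) (hp : p ≠ 0)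
    (hh : AEStronglyMeasurable h μ) (hf : AEStronglyMeasurable f μ)
    (hrR : ∀ᵐ x ∂μ, h x ∈ Icc r R) (hfC : ∀ᵐ x ∂μ, |f x| ≤ C) :
    HasDerivAt (fun t => ∫ x, (h x + t * f x) ^ p / p ∂μ) (∫ x, f x * h x ^ (p - 1) ∂μ) 0 := by
  obtain ⟨B, hB⟩ := exists_abs_rpow_le_of_mem_Icc (half_pos hr) (R + r / 2) (p - 1)
  set δ := r / (2 * (|C| + 1))
  have hδ : 0 < δ := by positivity
  have hrange : ∀ᵐ x ∂μ, ∀ t ∈ ball (0 : ℝ) δ, h x + t * f x ∈ Icc (r / 2) (R + r / 2) := by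
    filter_upwards [hrR, hfC] with x hx hfx t ht
    exact add_mul_mem_Icc_half hr hx hfx (mem_ball_zero_iff.1 ht)
  have hmeas : ∀ t s : ℝ, AEStronglyMeasurable (fun x => (h x + t * f x) ^ s) μ := fun t s =>
    ((hh.aemeasurable.add (hf.aemeasurable.const_mul t)).pow_const s).aestronglyMeasurable
  have hderiv := (hasDerivAt_integral_of_dominated_loc_of_deriv_le
    (F := fun t x => (h x + t * f x) ^ p / p)
    (F' := fun t x => f x * (h x + t * f x) ^ (p - 1)) (bound := fun _ => C * B)
    (ball_mem_nhds 0 hδ)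
    (.of_forall fun t => by simpa only [div_eq_mul_inv] using (hmeas t p).mul_const p⁻¹) ?_
    (hf.mul (hmeas 0 (p - 1))) ?_ (integrable_const _) ?_).2
  · simpa using hderiv
  · refine (integrable_rpow_of_ae_mem_Icc (R := R + r / 2) (half_pos hr)
      (hh.add (hf.const_mul 0)) ?_ p).div_const p
    filter_upwards [hrange] with x hx using hx 0 (mem_ball_self hδ)
  · filter_upwards [hrange, hfC] with x hx hfx t ht
    rw [norm_mul]
    exact mul_le_mul hfx (hB _ (hx t ht)) (norm_nonneg _) ((abs_nonneg _).trans hfx)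
  · filter_upwards [hrange] with x hx t ht
    have hpos : 0 < h x + t * f x := (half_pos hr).trans_le (hx t ht).1
    refine ((((hasDerivAt_mul_const (f x)).const_add (h x)).rpow_const
      (.inl hpos.ne')).div_const p).congr_deriv ?_
    rw [mul_right_comm, mul_div_cancel_right₀ _ hp]

theorem map_withDensity_of_comp_eq {α : Type*} [MeasurableSpace α] {μ : Measure α} {f : α → α}
    {g : α → ℝ≥0∞} (hf : MeasurePreserving f μ μ) (hfe : MeasurableEmbedding f)
    (hg : ∀ x, g (f x) = g x) : (μ.withDensity g).map f = μ.withDensity g := by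
  ext A hA
  rw [Measure.map_apply hf.measurable hA, withDensity_apply _ hA,
    withDensity_apply _ (hf.measurable hA), ← hf.setLIntegral_comp_preimage_emb hfe g A]
  simp only [hg]

theorem continuous_setIntegral_le {α : Type*} [MeasurableSpace α] {μ : Measure α} {g ω : α → ℝ}
    (hg : Measurable g) (hg0 : ∀ s, μ {x | g x = s} = 0) (hω : Integrable ω μ) :
    Continuous fun s => ∫ x in {x | g x ≤ s}, ω x ∂μ := by
  have hmeas : ∀ s, MeasurableSet {x | g x ≤ s} := fun s => measurableSet_le hg measurable_const
  simp only [← integral_indicator (hmeas _)]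
  refine continuous_iff_continuousAt.2 fun s => continuousAt_of_dominated
    (.of_forall fun t => (hω.indicator (hmeas t)).aestronglyMeasurable)
    (.of_forall fun t => .of_forall fun x => norm_indicator_le_norm_self ω x) hω.norm ?_
  filter_upwards [measure_eq_zero_iff_ae_notMem.1 (hg0 s)] with x hx
  refine continuousAt_const.congr (f := fun _ => {y | g y ≤ s}.indicator ω x) ?_
  rcases lt_or_gt_of_ne hx with hlt | hgt
  · filter_upwards [eventually_gt_nhds hlt] with t ht
    simp [indicator, hlt.le, ht.le]
  · filter_upwards [eventually_lt_nhds hgt] with t ht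
    simp [indicator, hgt.not_ge, ht.not_ge]

/-! ### Cones over subsets of a hyperplane -/

section HyperplaneCone

variable {E : Type*} [NormedAddCommGroup E] [InnerProductSpace ℝ E]

/-- The central projection onto the hyperplane `{y | ⟪y, u⟫ = 1}`, with junk value `0` on the
parallel hyperplane through the origin. -/
noncomputable def hyperplaneProj (u x : E) : E := ⟪x, u⟫⁻¹ • x

/-- The cone with apex `0` over a subset `B` of the hyperplane `{y | ⟪y, u⟫ = 1}`, without its
apex. -/
def hyperplaneCone (u : E) (B : Set E) : Set E :=
  {x | ⟪x, u⟫ ∈ Ioc 0 1 ∧ hyperplaneProj u x ∈ B}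

theorem smul_hyperplaneCone {a : ℝ} (ha : a ≠ 0) (u : E) (B : Set E) :
    a • hyperplaneCone u B = hyperplaneCone (a⁻¹ • u) (a • B) := by
  ext x
  simp only [mem_smul_set_iff_inv_smul_mem₀ ha, hyperplaneCone, hyperplaneProj,
    mem_ofPred_eq, real_inner_smul_left,
    real_inner_smul_right, smul_comm a⁻¹ (a⁻¹ * ⟪x, u⟫)⁻¹ x]

theorem preimage_hyperplaneCone_linearIsometryEquiv (R : E ≃ₗᵢ[ℝ] E) (u : E) (B : Set E) :
    R ⁻¹' hyperplaneCone (R u) B = hyperplaneCone u (R ⁻¹' B) := by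
  ext x
  simp only [hyperplaneCone, hyperplaneProj, mem_ofPred_eq, mem_preimage, R.inner_map_map, map_smul]

theorem preimage_hyperplaneCone_of_norm_eq_one {u : E} (hu : ‖u‖ = 1) (B : Set E) (t : ℝ) :
    (fun y : (ℝ ∙ u)ᗮ => t • u + (y : E)) ⁻¹' hyperplaneCone u B =
      {y | t ∈ Ioc 0 1 ∧ y ∈ t • ((fun y : (ℝ ∙ u)ᗮ => u + (y : E)) ⁻¹' B)} := by
  ext y
  have hinner : ⟪t • u + (y : E), u⟫ = t := by
    simp [inner_add_left, inner_smul_left, hu,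
      Submodule.mem_orthogonal_singleton_iff_inner_left.1 y.2]
  simp only [mem_preimage, hyperplaneCone, hyperplaneProj, mem_ofPred_eq, hinner]
  refine and_congr_right fun ht => ?_
  rw [mem_smul_set_iff_inv_smul_mem₀ ht.1.ne', smul_add, inv_smul_smul₀ ht.1.ne']
  rfl

variable [FiniteDimensional ℝ E] {m : ℕ}

theorem exists_continuousLinearEquiv_prod_orthogonal {u : E} (hu : u ≠ 0) :
    ∃ ψ : (ℝ × (ℝ ∙ u)ᗮ) ≃L[ℝ] E, ∀ t y, ψ (t, y) = t • u + y := by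
  let ψ₀ : (ℝ × (ℝ ∙ u)ᗮ) →ₗ[ℝ] E :=
    (LinearMap.toSpanSingleton ℝ E u).coprod (ℝ ∙ u)ᗮ.subtype
  have hinj : Function.Injective ψ₀ := by
    refine (injective_iff_map_eq_zero ψ₀).2 fun ⟨t, y⟩ h => ?_
    have hsum : t • u + (y : E) = 0 := h
    have hyu : ⟪u, (y : E)⟫ = 0 := Submodule.mem_orthogonal_singleton_iff_inner_right.1 y.2
    have ht : t = 0 := by
      have := congrArg (fun z => ⟪u, z⟫) hsum
      simpa [inner_add_right, inner_smul_right, hyu, hu] using this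
    simpa [ht] using hsum
  have hdim : Module.finrank ℝ (ℝ × (ℝ ∙ u)ᗮ) = Module.finrank ℝ E := by
    rw [Module.finrank_prod, ← (ℝ ∙ u).finrank_add_finrank_orthogonal, finrank_span_singleton hu,
      Module.finrank_self]
  exact ⟨(ψ₀.linearEquivOfInjective hinj hdim).toContinuousLinearEquiv, fun t y => rfl⟩

variable [MeasurableSpace E] [BorelSpace E]

theorem measurableSet_hyperplaneCone (u : E) {B : Set E} (hB : MeasurableSet B) :
    MeasurableSet (hyperplaneCone u B) := by
  have hinner : Measurable fun x : E => ⟪x, u⟫ := by fun_prop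
  exact (hinner measurableSet_Ioc).inter ((hinner.inv.smul measurable_id) hB)

theorem hausdorffMeasure_preimage_hyperplaneCone (hm : Module.finrank ℝ E = m + 1) {u : E}
    (hu : ‖u‖ = 1) {B : Set E} (hB : ∀ y ∈ B, ⟪y, u⟫ = 1) (t : ℝ) :
    μH[m] ((fun y : (ℝ ∙ u)ᗮ => t • u + (y : E)) ⁻¹' hyperplaneCone u B) =
      (Ioc 0 1).indicator (fun t => ENNReal.ofReal (t ^ m) * μH[m] B) t := by
  have : Fact (Module.finrank ℝ E = m + 1) := ⟨hm⟩
  have hF : Module.finrank ℝ (ℝ ∙ u)ᗮ = m :=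
    Submodule.finrank_orthogonal_span_singleton (norm_ne_zero_iff.1 (by simp [hu]))
  have hHaar : (μH[m] : Measure (ℝ ∙ u)ᗮ).IsAddHaarMeasure :=
    hF ▸ isAddHaarMeasure_hausdorffMeasure
  have hiso : Isometry fun y : (ℝ ∙ u)ᗮ => u + (y : E) :=
    (IsometryEquiv.addLeft u).isometry.comp isometry_subtype_coe
  have hrange : B ⊆ range fun y : (ℝ ∙ u)ᗮ => u + (y : E) := fun y hy => by
    refine ⟨⟨y - u, Submodule.mem_orthogonal_singleton_iff_inner_left.2 ?_⟩, by simp⟩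
    simp [inner_sub_left, hB y hy, hu]
  rw [preimage_hyperplaneCone_of_norm_eq_one hu]
  by_cases ht : t ∈ Ioc (0 : ℝ) 1
  · simp only [ht, true_and, ofPred_mem_eq, indicator_of_mem]
    rw [Measure.addHaar_smul, hF, abs_of_nonneg (pow_nonneg ht.1.le m),
      ← hiso.hausdorffMeasure_image (.inl m.cast_nonneg), image_preimage_eq_of_subset hrange]
  · simp [ht]

theorem exists_volume_hyperplaneCone_eq_of_norm_eq_one (hm : Module.finrank ℝ E = m + 1) {u : E}
    (hu : ‖u‖ = 1) :
    ∃ κ : ℝ≥0∞, κ ≠ 0 ∧ κ ≠ ∞ ∧ ∀ B : Set E, MeasurableSet B → (∀ y ∈ B, ⟪y, u⟫ = 1) →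
      volume (hyperplaneCone u B) = κ * μH[m] B := by
  have hu0 : u ≠ 0 := norm_ne_zero_iff.1 (by simp [hu])
  have : Fact (Module.finrank ℝ E = m + 1) := ⟨hm⟩
  have hF : Module.finrank ℝ (ℝ ∙ u)ᗮ = m := Submodule.finrank_orthogonal_span_singleton hu0
  have hHaar : (μH[m] : Measure (ℝ ∙ u)ᗮ).IsAddHaarMeasure :=
    hF ▸ isAddHaarMeasure_hausdorffMeasure
  obtain ⟨ψ, hψ⟩ := exists_continuousLinearEquiv_prod_orthogonal hu0
  set τ : Measure E := (volume.prod (μH[m] : Measure (ℝ ∙ u)ᗮ)).map ψ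
  have hτ : τ.IsAddHaarMeasure := ψ.isAddHaarMeasure_map _
  have hpow : ∫⁻ t in Ioc (0 : ℝ) 1, ENNReal.ofReal (t ^ m) = ENNReal.ofReal (1 / (m + 1)) := by
    rw [← ofReal_integral_eq_lintegral_ofReal (intervalIntegral.intervalIntegrable_pow m).1
      (ae_restrict_of_forall_mem measurableSet_Ioc fun t ht => pow_nonneg ht.1.le m),
      ← intervalIntegral.integral_of_le zero_le_one, integral_pow]
    simp
  refine ⟨Measure.addHaarScalarFactor volume τ * ENNReal.ofReal (1 / (m + 1)),
    mul_ne_zero ?_ (ENNReal.ofReal_pos.2 (by positivity)).ne',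
    ENNReal.mul_ne_top ENNReal.coe_ne_top ENNReal.ofReal_ne_top, fun B hB hBu => ?_⟩
  · exact_mod_cast (Measure.addHaarScalarFactor_pos_of_isAddHaarMeasure volume τ).ne'
  have hcone := measurableSet_hyperplaneCone u hB
  calc volume (hyperplaneCone u B)
      = Measure.addHaarScalarFactor volume τ * τ (hyperplaneCone u B) := by
        conv_lhs => rw [Measure.isAddLeftInvariant_eq_smul volume τ]
        rfl
    _ = Measure.addHaarScalarFactor volume τ *
          ∫⁻ t, (Ioc 0 1).indicator (fun t => ENNReal.ofReal (t ^ m) * μH[m] B) t := by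
        rw [Measure.map_apply ψ.continuous.measurable hcone,
          Measure.prod_apply (ψ.continuous.measurable hcone)]
        simp only [← hausdorffMeasure_preimage_hyperplaneCone hm hu hBu, ← preimage_comp,
          Function.comp_def, hψ]
    _ = _ := by
        rw [lintegral_indicator measurableSet_Ioc, lintegral_mul_const _ (by fun_prop), hpow,
          mul_assoc]

theorem exists_volume_hyperplaneCone_eq (hm : Module.finrank ℝ E = m + 1) :
    ∃ κ : ℝ≥0∞, κ ≠ 0 ∧ κ ≠ ∞ ∧ ∀ (u : E) (B : Set E), ‖u‖ = 1 → MeasurableSet B →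
      (∀ y ∈ B, ⟪y, u⟫ = 1) → volume (hyperplaneCone u B) = κ * μH[m] B := by
  have : Nontrivial E := Module.nontrivial_of_finrank_pos (R := ℝ) (by lia)
  obtain ⟨u₀, hu₀⟩ := exists_norm_eq E zero_le_one
  obtain ⟨κ, hκ0, hκ, hcone⟩ := exists_volume_hyperplaneCone_eq_of_norm_eq_one hm hu₀
  refine ⟨κ, hκ0, hκ, fun u B hu hB hBu => ?_⟩
  set R := (ℝ ∙ (u₀ - u))ᗮ.reflection
  have hR : R u₀ = u := Submodule.reflection_sub (by rw [hu, hu₀])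
  calc volume (hyperplaneCone u B) = volume (R ⁻¹' hyperplaneCone (R u₀) B) := by
        rw [hR]
        exact (R.measurePreserving.measure_preimage_equiv (f := R.toMeasurableEquiv) _).symm
    _ = κ * μH[m] (R ⁻¹' B) := by
        rw [preimage_hyperplaneCone_linearIsometryEquiv]
        refine hcone _ (R.continuous.measurable hB) fun y hy => ?_
        rw [← R.inner_map_map, hR, hBu _ hy]
    _ = κ * μH[m] B := by rw [← R.toIsometryEquiv.hausdorffMeasure_preimage m B]; rfl

variable (E m) in
/-- `κ` is the constant, determined by the normalisation of Hausdorff measure, for which cones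
over subsets `B` of a hyperplane at distance `‖u‖⁻¹` from the origin have volume
`κ ‖u‖⁻¹ H^m(B)`. -/
def IsConeRatio (κ : ℝ≥0∞) : Prop :=
  ∀ (u : E) (B : Set E), u ≠ 0 → MeasurableSet B → (∀ y ∈ B, ⟪y, u⟫ = 1) →
    ENNReal.ofReal ‖u‖ * volume (hyperplaneCone u B) = κ * μH[m] B

theorem exists_isConeRatio (hm : Module.finrank ℝ E = m + 1) :
    ∃ κ : ℝ≥0∞, κ ≠ 0 ∧ κ ≠ ∞ ∧ IsConeRatio E m κ := by
  obtain ⟨κ, hκ0, hκ, hcone⟩ := exists_volume_hyperplaneCone_eq hm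
  refine ⟨κ, hκ0, hκ, fun u B hu hB hBu => ?_⟩
  have ha : 0 < ‖u‖ := norm_pos_iff.2 hu
  have hBu' : ∀ y ∈ ‖u‖ • B, ⟪y, ‖u‖⁻¹ • u⟫ = 1 := by
    rintro _ ⟨y, hy, rfl⟩
    simp [inner_smul_left, inner_smul_right, hBu y hy, ha.ne']
  have hscaled := hcone (‖u‖⁻¹ • u) (‖u‖ • B) (by simp [norm_smul, ha.ne']) (hB.const_smul₀ _) hBu'
  rw [← smul_hyperplaneCone ha.ne', Measure.addHaar_smul, hm, abs_of_pos (by positivity),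
    Measure.hausdorffMeasure_smul₀ m.cast_nonneg ha.ne', nnnorm_norm, ENNReal.smul_def,
    NNReal.rpow_natCast, smul_eq_mul, ENNReal.coe_pow, ENNReal.ofReal_pow ha.le,
    ofReal_norm, pow_succ, mul_assoc, mul_left_comm κ] at hscaled
  rw [ofReal_norm]
  exact (ENNReal.mul_right_inj (pow_ne_zero _ (by simpa using hu))
    (ENNReal.pow_ne_top enorm_ne_top)).1 hscaled

end HyperplaneCone

/-! ### Convex bodies, radial projection and cone volume -/

section OriginBody

variable {E : Type*} [NormedAddCommGroup E] [InnerProductSpace ℝ E]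

/-- A convex body with the origin in its interior. -/
structure IsOriginBody (K : Set E) : Prop where
  isCompact : IsCompact K
  convex : Convex ℝ K
  zero_mem_interior : (0 : E) ∈ interior K

/-- The radial projection onto the boundary of `K`, sending `0` to the junk value `0`. -/
noncomputable def radialProj (K : Set E) (x : E) : E := (gauge K x)⁻¹ • x

namespace IsOriginBody

variable {K L : Set E} {x : E}

theorem mem_nhds_zero (hK : IsOriginBody K) : K ∈ 𝓝 (0 : E) :=
  mem_interior_iff_mem_nhds.1 hK.zero_mem_interior

theorem zero_mem (hK : IsOriginBody K) : (0 : E) ∈ K :=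
  interior_subset hK.zero_mem_interior

theorem continuous_gauge (hK : IsOriginBody K) : Continuous (gauge K) :=
  _root_.continuous_gauge hK.convex hK.mem_nhds_zero

theorem gauge_pos (hK : IsOriginBody K) (hx : x ≠ 0) : 0 < gauge K x :=
  (_root_.gauge_pos (absorbent_nhds_zero hK.mem_nhds_zero)
    (NormedSpace.isVonNBounded_of_isBounded ℝ hK.isCompact.isBounded)).2 hx

theorem mem_frontier_iff (hK : IsOriginBody K) : x ∈ frontier K ↔ gauge K x = 1 :=
  (gauge_eq_one_iff_mem_frontier hK.convex hK.mem_nhds_zero).symm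

theorem mem_iff_gauge_le_one (hK : IsOriginBody K) : x ∈ K ↔ gauge K x ≤ 1 := by
  rw [gauge_le_one_iff_mem_closure hK.convex hK.mem_nhds_zero, hK.isCompact.isClosed.closure_eq]

theorem frontier_subset (hK : IsOriginBody K) : frontier K ⊆ K :=
  hK.isCompact.isClosed.frontier_subset

theorem ne_zero_of_mem_frontier (hK : IsOriginBody K) (hx : x ∈ frontier K) : x ≠ 0 := by
  rintro rfl
  simpa using hK.mem_frontier_iff.1 hx

theorem smul_mem_iff (hL : IsOriginBody L) {r : ℝ} (hr : 0 ≤ r) (hx : x ≠ 0) :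
    r • x ∈ L ↔ r ≤ (gauge L x)⁻¹ := by
  rw [hL.mem_iff_gauge_le_one, gauge_smul_of_nonneg hr, smul_eq_mul,
    ← le_div_iff₀ (hL.gauge_pos hx), one_div]

theorem radialProj_mem_frontier (hK : IsOriginBody K) (hx : x ≠ 0) :
    radialProj K x ∈ frontier K := by
  rw [hK.mem_frontier_iff, radialProj, gauge_smul_of_nonneg (inv_nonneg.2 (gauge_nonneg x)),
    smul_eq_mul, inv_mul_cancel₀ (hK.gauge_pos hx).ne']

theorem gauge_smul_radialProj (hK : IsOriginBody K) (x : E) :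
    gauge K x • radialProj K x = x := by
  rcases eq_or_ne x 0 with rfl | hx
  · simp [radialProj]
  · exact smul_inv_smul₀ (hK.gauge_pos hx).ne' x

end IsOriginBody

theorem radialProj_smul_of_pos (K : Set E) {t : ℝ} (ht : 0 < t) (x : E) :
    radialProj K (t • x) = radialProj K x := by
  rw [radialProj, radialProj, gauge_smul_of_nonneg ht.le, smul_eq_mul, smul_smul, mul_inv_rev,
    inv_mul_cancel_right₀ ht.ne']

/-- The radial part `(m + 1) r ^ m dr` of Lebesgue measure in dimension `m + 1`, normalised to
give mass one to `(0, 1]`. -/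
noncomputable def radialMeasure (m : ℕ) : Measure ℝ :=
  (volume.restrict (Ioi 0)).withDensity fun r => ENNReal.ofReal ((m + 1) * r ^ m)

theorem radialMeasure_Iic (m : ℕ) (r : ℝ) :
    radialMeasure m (Iic r) = ENNReal.ofReal (max r 0 ^ (m + 1)) := by
  rw [radialMeasure, withDensity_apply _ measurableSet_Iic,
    Measure.restrict_restrict measurableSet_Iic, inter_comm, Ioi_inter_Iic]
  rcases le_total r 0 with hr | hr
  · simp [Ioc_eq_empty_of_le hr, max_eq_right hr]
  · rw [← ofReal_integral_eq_lintegral_ofReal, ← intervalIntegral.integral_of_le hr]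
    · rw [intervalIntegral.integral_const_mul, integral_pow, max_eq_left hr]
      congr 1
      field_simp
      simp
    · exact ((intervalIntegral.intervalIntegrable_pow m).const_mul _).1
    · exact ae_restrict_of_forall_mem measurableSet_Ioc fun t ht =>
        mul_nonneg (by positivity) (pow_nonneg ht.1.le m)

instance (m : ℕ) : SFinite (radialMeasure m) := by
  unfold radialMeasure
  infer_instance

theorem intervalIntegral_radialMeasure {m : ℕ} {a b : ℝ} (ha : 0 < a) (hb : 0 < b) (f : ℝ → ℝ) :
    ∫ r in a..b, f r ∂radialMeasure m = ∫ r in a..b, (m + 1) * r ^ m * f r := by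
  have hIoc : ∀ c d : ℝ, 0 < c → ∫ r in Ioc c d, f r ∂radialMeasure m =
      ∫ r in Ioc c d, (m + 1) * r ^ m * f r := by
    intro c d hc
    have hsub : Ioc c d ∩ Ioi 0 = Ioc c d := inter_eq_left.2 fun r hr => hc.trans hr.1
    rw [radialMeasure, setIntegral_withDensity_eq_setIntegral_toReal_smul (by fun_prop)
      (.of_forall fun r => ENNReal.ofReal_lt_top) _ measurableSet_Ioc,
      Measure.restrict_restrict measurableSet_Ioc, hsub]
    refine setIntegral_congr_fun measurableSet_Ioc fun r hr => ?_
    have hr0 : 0 < r := hc.trans hr.1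
    simp only [ENNReal.toReal_ofReal (show 0 ≤ (m + 1) * r ^ m by positivity), smul_eq_mul]
  rw [intervalIntegral, intervalIntegral, hIoc a b ha, hIoc b a hb]

theorem IsOriginBody.integral_indicator_sub_indicator_radialMeasure
    {K L : Set E} {m : ℕ} (hK : IsOriginBody K) (hL : IsOriginBody L) {ω : E → ℝ} {y : E}
    (hy : y ∈ frontier K)
    (hω : Integrable (fun r => ω (r • y)) (radialMeasure m)) :
    ∫ r, (L.indicator ω (r • y) - K.indicator ω (r • y)) ∂radialMeasure m =
      ∫ r in 1..(gauge L y)⁻¹, ω (r • y) ∂radialMeasure m := by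
  have hy0 := hK.ne_zero_of_mem_frontier hy
  have hpos : ∀ᵐ r ∂radialMeasure m, 0 < r :=
    (withDensity_absolutelyContinuous _ _).ae_le (ae_restrict_mem measurableSet_Ioi)
  have hindicator : ∀ {M : Set E}, IsOriginBody M → ∀ᵐ r ∂radialMeasure m,
      M.indicator ω (r • y) = (Iic (gauge M y)⁻¹).indicator (fun r => ω (r • y)) r := by
    intro M hM
    filter_upwards [hpos] with r hr
    have hmem := hM.smul_mem_iff hr.le hy0
    by_cases hle : r ≤ (gauge M y)⁻¹
    · rw [indicator_of_mem (hmem.2 hle), indicator_of_mem (mem_Iic.2 hle)]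
    · rw [indicator_of_notMem (mt hmem.1 hle), indicator_of_notMem (mt mem_Iic.1 hle)]
  have hone : (gauge K y)⁻¹ = 1 := by rw [hK.mem_frontier_iff.1 hy, inv_one]
  rw [← intervalIntegral.integral_Iic_sub_Iic hω.integrableOn hω.integrableOn,
    ← integral_indicator measurableSet_Iic, ← integral_indicator measurableSet_Iic,
    ← integral_sub (hω.indicator measurableSet_Iic) (hω.indicator measurableSet_Iic)]
  refine integral_congr_ae ?_
  filter_upwards [hindicator hK, hindicator hL] with r hrK hrL
  rw [hrK, hrL, hone]

variable [MeasurableSpace E] [BorelSpace E]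

theorem IsOriginBody.measurable_radialProj {K : Set E} (hK : IsOriginBody K)
    [SecondCountableTopology E] : Measurable (radialProj K) :=
  hK.continuous_gauge.measurable.inv.smul measurable_id

variable [FiniteDimensional ℝ E]

/-- The cone-volume measure of `K`: the mass of `A ⊆ ∂K` is the volume of the cone over `A` with
apex at the origin. -/
noncomputable def coneVolume (K : Set E) : Measure E :=
  (volume.restrict K).map (radialProj K)

namespace IsOriginBody

variable {K L : Set E} {m : ℕ}

theorem isFiniteMeasure_coneVolume (hK : IsOriginBody K) : IsFiniteMeasure (coneVolume K) := by
  have : IsFiniteMeasure (volume.restrict K) := ⟨by simpa using hK.isCompact.measure_lt_top⟩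
  unfold coneVolume
  infer_instance

theorem coneVolume_apply (hK : IsOriginBody K) {A : Set E} (hA : MeasurableSet A) :
    coneVolume K A = volume (radialProj K ⁻¹' A ∩ K) := by
  rw [coneVolume, Measure.map_apply hK.measurable_radialProj hA,
    Measure.restrict_apply (hK.measurable_radialProj hA)]

theorem volume_radialProj_gauge_preimage (hK : IsOriginBody K)
    (hm : Module.finrank ℝ E = m + 1) {A : Set E} (hA : MeasurableSet A) (r : ℝ) :
    volume {x | radialProj K x ∈ A ∧ gauge K x ≤ r} =
      coneVolume K A * radialMeasure m (Iic r) := by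
  have : Nontrivial E := Module.nontrivial_of_finrank_pos (R := ℝ) (by lia)
  rw [radialMeasure_Iic, hK.coneVolume_apply hA]
  rcases le_or_gt r 0 with hr | hr
  · have hsub : {x | radialProj K x ∈ A ∧ gauge K x ≤ r} ⊆ {0} := fun x hx => by
      by_contra h0
      exact (hK.gauge_pos h0).not_ge (hx.2.trans hr)
    simp [measure_mono_null hsub (measure_singleton 0), max_eq_right hr]
  · have hset : {x | radialProj K x ∈ A ∧ gauge K x ≤ r} = r • (radialProj K ⁻¹' A ∩ K) := by
      ext x
      rw [mem_smul_set_iff_inv_smul_mem₀ hr.ne', mem_inter_iff, mem_preimage,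
        radialProj_smul_of_pos K (inv_pos.2 hr), hK.mem_iff_gauge_le_one,
        gauge_smul_of_nonneg (inv_pos.2 hr).le, smul_eq_mul, inv_mul_le_one₀ hr]
      rfl
    rw [hset, Measure.addHaar_smul, hm, abs_of_pos (by positivity), max_eq_left hr.le, mul_comm]

theorem map_radialProj_gauge_volume (hK : IsOriginBody K) (hm : Module.finrank ℝ E = m + 1) :
    volume.map (fun x => (radialProj K x, gauge K x)) =
      (coneVolume K).prod (radialMeasure m) := by
  have := hK.isFiniteMeasure_coneVolume
  have hmeas : Measurable fun x => (radialProj K x, gauge K x) :=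
    hK.measurable_radialProj.prodMk hK.continuous_gauge.measurable
  have hspan : (radialMeasure m).FiniteSpanningSetsIn (range Iic) :=
    { set := fun k => Iic (k : ℝ)
      set_mem := fun k => mem_range_self _
      finite := fun k => by simp [radialMeasure_Iic]
      spanning := iUnion_eq_univ_iff.2 fun x => exists_nat_ge x }
  refine (Measure.prod_eq_generateFrom MeasurableSpace.generateFrom_measurableSet
    (borel_eq_generateFrom_Iic ℝ).symm MeasurableSpace.isPiSystem_measurableSet
    isPiSystem_Iic (coneVolume K).toFiniteSpanningSetsIn hspan ?_).symm
  rintro A hA _ ⟨r, rfl⟩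
  rw [Measure.map_apply hmeas (hA.prod measurableSet_Iic),
    ← hK.volume_radialProj_gauge_preimage hm hA]
  rfl

theorem measurePreserving_smul (hK : IsOriginBody K) (hm : Module.finrank ℝ E = m + 1) :
    MeasurePreserving (fun p : E × ℝ => p.2 • p.1) ((coneVolume K).prod (radialMeasure m)) := by
  have hsmul : Measurable fun p : E × ℝ => p.2 • p.1 := by fun_prop
  have hmeas : Measurable fun x => (radialProj K x, gauge K x) :=
    hK.measurable_radialProj.prodMk hK.continuous_gauge.measurable
  refine ⟨hsmul, ?_⟩
  rw [← hK.map_radialProj_gauge_volume hm, Measure.map_map hsmul hmeas]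
  simp [Function.comp_def, hK.gauge_smul_radialProj]

theorem ae_coneVolume_iff (hK : IsOriginBody K) {P : E → Prop} (hP : MeasurableSet {y | P y}) :
    (∀ᵐ y ∂coneVolume K, P y) ↔ ∀ᵐ x, x ∈ K → P (radialProj K x) := by
  rw [coneVolume, ae_map_iff hK.measurable_radialProj.aemeasurable hP,
    ae_restrict_iff' hK.isCompact.measurableSet]

theorem ae_mem_frontier_coneVolume [Nontrivial E] (hK : IsOriginBody K) :
    ∀ᵐ y ∂coneVolume K, y ∈ frontier K := by
  refine (hK.ae_coneVolume_iff isClosed_frontier.measurableSet).2 ?_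
  filter_upwards [compl_mem_ae_iff.2 (measure_singleton (0 : E))] with x hx _
  exact hK.radialProj_mem_frontier hx

theorem integrable_and_integral_sub_eq (hK : IsOriginBody K) (hL : IsOriginBody L)
    (hm : Module.finrank ℝ E = m + 1) {ω : E → ℝ} (hω : Integrable ω) :
    Integrable (fun y => ∫ r in 1..(gauge L y)⁻¹, ω (r • y) ∂radialMeasure m) (coneVolume K) ∧
      (∫ x in L, ω x) - ∫ x in K, ω x =
        ∫ y, ∫ r in 1..(gauge L y)⁻¹, ω (r • y) ∂radialMeasure m ∂coneVolume K := by
  have : Nontrivial E := Module.nontrivial_of_finrank_pos (R := ℝ) (by lia)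
  have := hK.isFiniteMeasure_coneVolume
  have hsmul := hK.measurePreserving_smul hm
  have hωL := hω.indicator hL.isCompact.measurableSet
  have hωK := hω.indicator hK.isCompact.measurableSet
  have hdiff := hsmul.integrable_comp_of_integrable (hωL.sub hωK)
  have hinner : ∀ᵐ y ∂coneVolume K,
      ∫ r, (L.indicator ω (r • y) - K.indicator ω (r • y)) ∂radialMeasure m =
        ∫ r in 1..(gauge L y)⁻¹, ω (r • y) ∂radialMeasure m := by
    filter_upwards [hK.ae_mem_frontier_coneVolume,
      (hsmul.integrable_comp_of_integrable hω).prod_right_ae] with y hy hyω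
    exact hK.integral_indicator_sub_indicator_radialMeasure hL hy hyω
  refine ⟨hdiff.integral_prod_left.congr hinner, ?_⟩
  calc (∫ x in L, ω x) - ∫ x in K, ω x
      = ∫ x, (L.indicator ω x - K.indicator ω x) := by
        rw [integral_sub hωL hωK, integral_indicator hL.isCompact.measurableSet,
          integral_indicator hK.isCompact.measurableSet]
    _ = ∫ p : E × ℝ, (L.indicator ω (p.2 • p.1) - K.indicator ω (p.2 • p.1))
          ∂(coneVolume K).prod (radialMeasure m) := by
        have := integral_map hsmul.aemeasurable
          (hsmul.map_eq.symm ▸ (hωL.sub hωK).aestronglyMeasurable)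
        rwa [hsmul.map_eq] at this
    _ = _ := (integral_prod _ hdiff).trans (integral_congr_ae hinner)

end IsOriginBody
end OriginBody

/-! ### Outer normals -/

section Normals

variable {E : Type*} [NormedAddCommGroup E] [InnerProductSpace ℝ E]

/-- `v` is an outer normal vector, of any length, of `K` at `x`. -/
def IsOuterNormal (K : Set E) (x v : E) : Prop :=
  ∀ y ∈ K, ⟪y, v⟫ ≤ ⟪x, v⟫

/-- A Borel outer unit normal selection for `K`; only its values on the boundary of `K` are
geometrically constrained. -/
structure IsNormalSelection [MeasurableSpace E] (K : Set E) (ν : E → E) : Prop where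
  measurable : Measurable ν
  norm_eq_one : ∀ x, ‖ν x‖ = 1
  isOuterNormal : ∀ x ∈ frontier K, IsOuterNormal K x (ν x)

/-- The boundary points of `K` at which the gauge is differentiable, that is, at which the outer
unit normal is unique. -/
def regularBoundary (K : Set E) : Set E :=
  {x ∈ frontier K | DifferentiableAt ℝ (gauge K) x}

theorem measurableSet_regularBoundary [MeasurableSpace E] [BorelSpace E] (K : Set E) :
    MeasurableSet (regularBoundary K) :=
  isClosed_frontier.measurableSet.inter (measurableSet_of_differentiableAt ℝ (gauge K))

theorem IsOuterNormal.le_inner_of_closedBall_subset {K : Set E} {x v : E} {r : ℝ}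
    (hxv : IsOuterNormal K x v) (hv : ‖v‖ = 1) (hr : 0 ≤ r) (hrK : closedBall 0 r ⊆ K) :
    r ≤ ⟪x, v⟫ := by
  have := hxv (r • v) (hrK (by simp [norm_smul, hv, abs_of_nonneg hr]))
  rwa [real_inner_smul_left, real_inner_self_eq_norm_sq, hv, one_pow, mul_one] at this

namespace IsOriginBody

variable {K : Set E} {x v w : E}

theorem inner_pos_of_isOuterNormal (hK : IsOriginBody K) (hv : ‖v‖ = 1)
    (hxv : IsOuterNormal K x v) : 0 < ⟪x, v⟫ := by
  obtain ⟨r, hr, hrK⟩ := nhds_basis_closedBall.mem_iff.1 hK.mem_nhds_zero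
  exact hr.trans_le (hxv.le_inner_of_closedBall_subset hv hr.le hrK)

theorem inner_le_inner_mul_gauge (hK : IsOriginBody K) (hxv : IsOuterNormal K x v) (y : E) :
    ⟪y, v⟫ ≤ ⟪x, v⟫ * gauge K y := by
  rcases eq_or_ne y 0 with rfl | hy
  · simp
  · have := hxv _ (hK.frontier_subset (hK.radialProj_mem_frontier hy))
    rwa [radialProj, real_inner_smul_left, inv_mul_le_iff₀ (hK.gauge_pos hy), mul_comm] at this

theorem inner_mul_fderiv_gauge (hK : IsOriginBody K) (hx : x ∈ regularBoundary K)
    (hxv : IsOuterNormal K x v) (z : E) : ⟪x, v⟫ * fderiv ℝ (gauge K) x z = ⟪v, z⟫ := by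
  have hmin : IsLocalMin (fun y => ⟪x, v⟫ * gauge K y - innerSL ℝ v y) x := by
    refine .of_forall fun y => ?_
    simp only [innerSL_apply_apply, hK.mem_frontier_iff.1 hx.1, mul_one, real_inner_comm x v,
      sub_self, sub_nonneg, real_inner_comm y v]
    exact hK.inner_le_inner_mul_gauge hxv y
  have hzero := hmin.hasFDerivAt_eq_zero
    ((hx.2.hasFDerivAt.const_mul ⟪x, v⟫).sub (innerSL ℝ v).hasFDerivAt)
  simpa [sub_eq_zero] using congrArg (fun A : E →L[ℝ] ℝ => A z) hzero

theorem eq_of_isOuterNormal (hK : IsOriginBody K) (hx : x ∈ regularBoundary K) (hv : ‖v‖ = 1)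
    (hw : ‖w‖ = 1) (hxv : IsOuterNormal K x v) (hxw : IsOuterNormal K x w) : v = w := by
  have hpv := hK.inner_pos_of_isOuterNormal hv hxv
  have hpw := hK.inner_pos_of_isOuterNormal hw hxw
  have hsmul : ⟪x, w⟫ • v = ⟪x, v⟫ • w := by
    refine ext_inner_right ℝ fun z => ?_
    rw [real_inner_smul_left, real_inner_smul_left, ← hK.inner_mul_fderiv_gauge hx hxv,
      ← hK.inner_mul_fderiv_gauge hx hxw]
    ring
  have hnorm := congrArg norm hsmul
  rw [norm_smul, norm_smul, hv, hw, mul_one, mul_one, Real.norm_of_nonneg hpw.le,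
    Real.norm_of_nonneg hpv.le] at hnorm
  rw [hnorm] at hsmul
  exact smul_right_injective E hpv.ne' hsmul

theorem differentiableAt_gauge_radialProj (hK : IsOriginBody K) (hx : x ≠ 0)
    (hd : DifferentiableAt ℝ (gauge K) x) : DifferentiableAt ℝ (gauge K) (radialProj K x) := by
  have hg := hK.gauge_pos hx
  have heq : gauge K = fun y => (gauge K x)⁻¹ * gauge K (gauge K x • y) := by
    funext y
    rw [gauge_smul_of_nonneg hg.le, smul_eq_mul, inv_mul_cancel_left₀ hg.ne']
  rw [heq]
  refine .const_mul (.comp (g := gauge K) (f := fun y => gauge K x • y) _ ?_ (by fun_prop)) _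
  rwa [hK.gauge_smul_radialProj]

variable [FiniteDimensional ℝ E] [MeasurableSpace E]

theorem tendsto_normalSelection (hK : IsOriginBody K) {ν : E → E} (hν : IsNormalSelection K ν)
    (hx : x ∈ regularBoundary K) : Tendsto ν (𝓝[frontier K] x) (𝓝 (ν x)) := by
  refine (isCompact_sphere (0 : E) 1).tendsto_nhds_of_unique_mapClusterPt
    (.of_forall fun y => by simp [hν.norm_eq_one]) fun v hv hcluster => ?_
  refine hK.eq_of_isOuterNormal hx (by simpa using hv) (hν.norm_eq_one x) (fun y hy => ?_)
    (hν.isOuterNormal x hx.1)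
  obtain ⟨U, hU, hUv⟩ := mapClusterPt_iff_ultrafilter.1 hcluster
  have hUx : Tendsto id (U : Filter E) (𝓝 x) := hU.trans nhdsWithin_le_nhds
  have hUfrontier : ∀ᶠ z in (U : Filter E), z ∈ frontier K := hU self_mem_nhdsWithin
  exact le_of_tendsto_of_tendsto ((tendsto_const_nhds (x := y)).inner hUv) (hUx.inner hUv)
    (hUfrontier.mono fun z hz => hν.isOuterNormal z hz y hy)

variable [BorelSpace E]

theorem ae_mem_regularBoundary_coneVolume [Nontrivial E] (hK : IsOriginBody K) :
    ∀ᵐ y ∂coneVolume K, y ∈ regularBoundary K := by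
  obtain ⟨C, hC⟩ := hK.convex.lipschitz_gauge hK.mem_nhds_zero
  refine (hK.ae_coneVolume_iff (measurableSet_regularBoundary K)).2 ?_
  filter_upwards [compl_mem_ae_iff.2 (measure_singleton (0 : E)),
    hC.ae_differentiableAt (μ := (volume : Measure E))] with x hx hd _
  exact ⟨hK.radialProj_mem_frontier hx, hK.differentiableAt_gauge_radialProj hx hd⟩

end IsOriginBody

theorem IsNormalSelection.apply_neg_of_mem_regularBoundary [MeasurableSpace E] {K : Set E}
    {ν : E → E} {y : E} (hν : IsNormalSelection K ν) (hK : IsOriginBody K) (hKneg : K = -K)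
    (hx : y ∈ regularBoundary K) : ν (-y) = -ν y := by
  have hy : -y ∈ frontier K := by
    rw [hK.mem_frontier_iff, gauge_neg fun z hz => by rwa [hKneg, Set.neg_mem_neg]]
    exact hK.mem_frontier_iff.1 hx.1
  have hnormal : IsOuterNormal K y (-ν (-y)) := fun z hz => by
    have := hν.isOuterNormal _ hy (-z) (by rwa [hKneg, Set.neg_mem_neg])
    rwa [inner_neg_left, inner_neg_left, ← inner_neg_right, ← inner_neg_right] at this
  rw [hK.eq_of_isOuterNormal hx (hν.norm_eq_one y) (by rw [norm_neg, hν.norm_eq_one])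
    (hν.isOuterNormal y hx.1) hnormal, neg_neg]

end Normals

/-! ### Cone volume as a weighted surface measure -/

section SurfaceMeasure

variable {X : Type*} [MetricSpace X] [MeasurableSpace X] [BorelSpace X] {m : ℕ} {K A : Set X}
  {g : X → ℝ} {c : ℝ}

/-- The measure with density `g` with respect to `m`-dimensional Hausdorff measure on `∂K`; the
negative part of `g` is ignored. -/
noncomputable def surfaceMeasure (m : ℕ) (K : Set X) (g : X → ℝ) : Measure X :=
  (μH[m].restrict (frontier K)).withDensity fun x => ENNReal.ofReal (g x)

theorem surfaceMeasure_apply (hA : MeasurableSet A) (hAK : A ⊆ frontier K) :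
    surfaceMeasure m K g A = ∫⁻ x in A, ENNReal.ofReal (g x) ∂μH[m] := by
  rw [surfaceMeasure, withDensity_apply _ hA, Measure.restrict_restrict hA,
    inter_eq_left.2 hAK]

theorem surfaceMeasure_le_mul (hA : MeasurableSet A) (hAK : A ⊆ frontier K)
    (hg : ∀ x ∈ A, g x ≤ c) : surfaceMeasure m K g A ≤ ENNReal.ofReal c * μH[m] A := by
  rw [surfaceMeasure_apply hA hAK, ← setLIntegral_const]
  exact setLIntegral_mono' hA fun x hx => ENNReal.ofReal_le_ofReal (hg x hx)

theorem mul_le_surfaceMeasure (hA : MeasurableSet A) (hAK : A ⊆ frontier K)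
    (hg : ∀ x ∈ A, c ≤ g x) : ENNReal.ofReal c * μH[m] A ≤ surfaceMeasure m K g A := by
  rw [surfaceMeasure_apply hA hAK, ← setLIntegral_const]
  exact setLIntegral_mono' hA fun x hx => ENNReal.ofReal_le_ofReal (hg x hx)

theorem integral_surfaceMeasure (hg : Measurable g) (hg0 : ∀ x ∈ frontier K, 0 ≤ g x) (F : X → ℝ) :
    ∫ x, F x ∂surfaceMeasure m K g = ∫ x in frontier K, g x * F x ∂μH[m] := by
  rw [surfaceMeasure, integral_withDensity_eq_integral_toReal_smul hg.ennreal_ofReal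
    (.of_forall fun x => ENNReal.ofReal_lt_top)]
  refine setIntegral_congr_fun isClosed_frontier.measurableSet fun x hx => ?_
  simp only [ENNReal.toReal_ofReal (hg0 x hx), smul_eq_mul]

theorem surfaceMeasure_eq_zero_iff (hg : Measurable g) (hg0 : ∀ x ∈ frontier K, 0 < g x) :
    surfaceMeasure m K g = 0 ↔ μH[m] (frontier K) = 0 := by
  rw [surfaceMeasure, withDensity_eq_zero_iff hg.ennreal_ofReal.aemeasurable, EventuallyEq,
    ae_restrict_iff' isClosed_frontier.measurableSet, measure_eq_zero_iff_ae_notMem]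
  refine eventually_congr (.of_forall fun x => imp_congr_right fun hx => ?_)
  simpa using hg0 x hx

end SurfaceMeasure

section ConeVolume

variable {E : Type*} [NormedAddCommGroup E] [InnerProductSpace ℝ E] {K A : Set E} {u x : E}
  {c : ℝ}

theorem IsOriginBody.radialProj_eq_self (hK : IsOriginBody K) (hx : x ∈ frontier K) :
    radialProj K x = x := by
  rw [radialProj, hK.mem_frontier_iff.1 hx, inv_one, one_smul]

theorem hyperplaneProj_smul {t : ℝ} (ht : t ≠ 0) (u x : E) :
    hyperplaneProj u (t • x) = hyperplaneProj u x := by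
  rw [hyperplaneProj, hyperplaneProj, real_inner_smul_left, smul_smul, mul_inv_rev,
    inv_mul_cancel_right₀ ht]

theorem inner_hyperplaneProj (hx : ⟪x, u⟫ ≠ 0) : ⟪hyperplaneProj u x, u⟫ = 1 := by
  rw [hyperplaneProj, real_inner_smul_left, inv_mul_cancel₀ hx]

theorem IsOriginBody.radialProj_preimage_inter_subset_smul_hyperplaneCone (hK : IsOriginBody K)
    (hAc : ∀ a ∈ A, ⟪a, u⟫ ∈ Ioc 0 c) :
    radialProj K ⁻¹' A ∩ K ⊆ c • hyperplaneCone u (hyperplaneProj u '' A) := by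
  rintro x ⟨hxA, hxK⟩
  obtain ⟨hpos, hle⟩ := hAc _ hxA
  have hc : 0 < c := hpos.trans_le hle
  have hx : x = gauge K x • radialProj K x := (hK.gauge_smul_radialProj x).symm
  have hx0 : x ≠ 0 := by
    rintro rfl
    simp [radialProj] at hpos
  have hg := hK.gauge_pos hx0
  rw [mem_smul_set_iff_inv_smul_mem₀ hc.ne', hx, smul_smul]
  refine ⟨?_, radialProj K x, hxA, (hyperplaneProj_smul (by positivity) _ _).symm⟩
  rw [real_inner_smul_left, mul_assoc]
  refine ⟨by positivity, (inv_mul_le_one₀ hc).2 ?_⟩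
  calc gauge K x * ⟪radialProj K x, u⟫ ≤ 1 * c :=
        mul_le_mul (hK.mem_iff_gauge_le_one.1 hxK) hle hpos.le zero_le_one
    _ = c := one_mul c

theorem IsOriginBody.hyperplaneCone_subset_smul_radialProj_preimage_inter (hK : IsOriginBody K)
    (hA : A ⊆ frontier K) (hc : 0 < c) (hAc : ∀ a ∈ A, c⁻¹ ≤ ⟪a, u⟫) :
    hyperplaneCone u (hyperplaneProj u '' A) ⊆ c • (radialProj K ⁻¹' A ∩ K) := by
  rintro x ⟨⟨hpos, hle⟩, a, ha, hax⟩
  have hau : 0 < ⟪a, u⟫ := (inv_pos.2 hc).trans_le (hAc a ha)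
  have hx : c⁻¹ • x = (c⁻¹ * (⟪x, u⟫ * ⟪a, u⟫⁻¹)) • a := by
    rw [mul_smul, mul_smul]
    change c⁻¹ • x = c⁻¹ • ⟪x, u⟫ • hyperplaneProj u a
    rw [hax, hyperplaneProj, smul_inv_smul₀ hpos.ne']
  have hcoef : c⁻¹ * (⟪x, u⟫ * ⟪a, u⟫⁻¹) ≤ 1 := by
    rw [inv_mul_le_one₀ hc]
    calc ⟪x, u⟫ * ⟪a, u⟫⁻¹ ≤ 1 * c :=
          mul_le_mul hle (inv_le_of_inv_le₀ hc (hAc a ha)) (by positivity) zero_le_one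
      _ = c := one_mul c
  rw [mem_smul_set_iff_inv_smul_mem₀ hc.ne', hx]
  constructor
  · rwa [mem_preimage, radialProj_smul_of_pos K (by positivity),
      hK.radialProj_eq_self (hA ha)]
  · rwa [hK.mem_iff_gauge_le_one, gauge_smul_of_nonneg (by positivity),
      hK.mem_frontier_iff.1 (hA ha), smul_eq_mul, mul_one]

theorem hasStrictFDerivAt_hyperplaneProj (hx : ⟪x, u⟫ = 1) :
    HasStrictFDerivAt (hyperplaneProj u)
      (ContinuousLinearMap.id ℝ E - (innerSL ℝ u).smulRight x) x := by
  have hinner : HasStrictFDerivAt (fun y => ⟪y, u⟫) (innerSL ℝ u) x := by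
    simpa only [real_inner_comm u] using! (innerSL ℝ u).hasStrictFDerivAt (x := x)
  have hinv := (hasStrictDerivAt_inv (x := ⟪x, u⟫) (by simp [hx])).comp_hasStrictFDerivAt x hinner
  convert! hinv.smul (hasStrictFDerivAt_id x) using 1
  ext z
  simp [hx, sub_eq_add_neg]

theorem IsNormalSelection.isLittleO_inner_sub [FiniteDimensional ℝ E] [MeasurableSpace E]
    {ν : E → E} (hν : IsNormalSelection K ν) (hK : IsOriginBody K) (hx : x ∈ regularBoundary K) :
    (fun p : E × E => ⟪p.1 - p.2, ν x⟫) =o[𝓝[frontier K] x ×ˢ 𝓝[frontier K] x]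
      fun p => p.1 - p.2 := by
  refine Asymptotics.isLittleO_iff.2 fun ε hε => ?_
  have hnear : ∀ᶠ y in 𝓝[frontier K] x, y ∈ frontier K ∧ ‖ν x - ν y‖ ≤ ε := by
    refine eventually_mem_nhdsWithin.and ?_
    filter_upwards [(hK.tendsto_normalSelection hν hx).eventually (closedBall_mem_nhds _ hε)]
      with y hy
    rwa [← dist_eq_norm, dist_comm]
  filter_upwards [hnear.prod_mk hnear] with ⟨y, z⟩ ⟨⟨hy, hyε⟩, hz, hzε⟩
  have hyz : ⟪z - y, ν y⟫ ≤ 0 := by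
    rw [inner_sub_left, sub_nonpos]
    exact hν.isOuterNormal y hy z (hK.frontier_subset hz)
  have hzy : ⟪y - z, ν z⟫ ≤ 0 := by
    rw [inner_sub_left, sub_nonpos]
    exact hν.isOuterNormal z hz y (hK.frontier_subset hy)
  have hbound : ∀ w : E, ‖ν x - ν w‖ ≤ ε → ∀ d : E, ⟪d, ν w⟫ ≤ 0 → ⟪d, ν x⟫ ≤ ε * ‖d‖ := by
    intro w hw d hd
    calc ⟪d, ν x⟫ = ⟪d, ν w⟫ + ⟪d, ν x - ν w⟫ := by rw [inner_sub_right]; ring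
      _ ≤ 0 + ‖d‖ * ‖ν x - ν w‖ := add_le_add hd (real_inner_le_norm _ _)
      _ ≤ ε * ‖d‖ := by rw [zero_add, mul_comm]; gcongr
  rw [Real.norm_eq_abs, abs_le', ← inner_neg_left, neg_sub]
  refine ⟨hbound z hzε _ hzy, ?_⟩
  rw [norm_sub_rev]
  exact hbound y hyε _ hyz

theorem IsNormalSelection.isLittleO_hyperplaneProj_sub [FiniteDimensional ℝ E] [MeasurableSpace E]
    {ν : E → E} (hν : IsNormalSelection K ν) (hK : IsOriginBody K) (hx : x ∈ regularBoundary K) :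
    (fun p : E × E => hyperplaneProj (⟪x, ν x⟫⁻¹ • ν x) p.1 -
        hyperplaneProj (⟪x, ν x⟫⁻¹ • ν x) p.2 - (p.1 - p.2))
      =o[𝓝[frontier K] x ×ˢ 𝓝[frontier K] x] fun p => p.1 - p.2 := by
  have hpos := hK.inner_pos_of_isOuterNormal (hν.norm_eq_one x) (hν.isOuterNormal x hx.1)
  have hderiv := (hasStrictFDerivAt_hyperplaneProj (u := ⟪x, ν x⟫⁻¹ • ν x) (x := x)
    (by rw [real_inner_smul_right, inv_mul_cancel₀ hpos.ne'])).isLittleO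
  rw [nhds_prod_eq] at hderiv
  have hinner := ((⟪x, ν x⟫⁻¹ • ContinuousLinearMap.toSpanSingleton ℝ x).isBigO_comp
    (fun p : E × E => ⟪p.1 - p.2, ν x⟫) _).trans_isLittleO (hν.isLittleO_inner_sub hK hx)
  refine ((hderiv.mono (prod_mono nhdsWithin_le_nhds nhdsWithin_le_nhds)).sub hinner).congr_left
    fun p => ?_
  have hlin : (ContinuousLinearMap.id ℝ E - (innerSL ℝ (⟪x, ν x⟫⁻¹ • ν x)).smulRight x)
      (p.1 - p.2) = p.1 - p.2 -
        (⟪x, ν x⟫⁻¹ • ContinuousLinearMap.toSpanSingleton ℝ x) ⟪p.1 - p.2, ν x⟫ := by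
    simp [real_inner_comm (ν x), smul_smul]
  rw [hlin]
  abel

theorem IsNormalSelection.eventually_bilipschitz_hyperplaneProj [FiniteDimensional ℝ E]
    [MeasurableSpace E] {ν : E → E} (hν : IsNormalSelection K ν) (hK : IsOriginBody K)
    (hx : x ∈ regularBoundary K) (hc : 1 < c) :
    ∀ᶠ p in 𝓝[frontier K] x ×ˢ 𝓝[frontier K] x,
      ‖hyperplaneProj (⟪x, ν x⟫⁻¹ • ν x) p.1 - hyperplaneProj (⟪x, ν x⟫⁻¹ • ν x) p.2‖ ≤
        c * ‖p.1 - p.2‖ ∧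
      ‖p.1 - p.2‖ ≤ c *
        ‖hyperplaneProj (⟪x, ν x⟫⁻¹ • ν x) p.1 - hyperplaneProj (⟪x, ν x⟫⁻¹ • ν x) p.2‖ := by
  have hc0 : 0 < c := one_pos.trans hc
  have hε : 0 < 1 - c⁻¹ := sub_pos.2 (inv_lt_one_of_one_lt₀ hc)
  filter_upwards [(hν.isLittleO_hyperplaneProj_sub hK hx).def hε] with p hp
  have hamgm : 2 ≤ c + c⁻¹ := by
    have := mul_inv_cancel₀ hc0.ne'
    nlinarith [sq_nonneg (c - 1), inv_pos.2 hc0]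
  set d := p.1 - p.2
  set e := hyperplaneProj (⟪x, ν x⟫⁻¹ • ν x) p.1 - hyperplaneProj (⟪x, ν x⟫⁻¹ • ν x) p.2
  constructor
  · nlinarith [norm_sub_norm_le e d, norm_nonneg d]
  · rw [← inv_mul_le_iff₀ hc0]
    linarith [norm_sub_norm_le d e, norm_sub_rev d e]

theorem IsOriginBody.radialProj_hyperplaneProj (hK : IsOriginBody K) (hx : x ∈ frontier K)
    (hu : 0 < ⟪x, u⟫) : radialProj K (hyperplaneProj u x) = x := by
  rw [hyperplaneProj, radialProj_smul_of_pos K (inv_pos.2 hu), hK.radialProj_eq_self hx]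

theorem continuousAt_hyperplaneProj (hx : ⟪x, u⟫ ≠ 0) : ContinuousAt (hyperplaneProj u) x :=
  ((continuousAt_id.inner continuousAt_const).inv₀ hx).smul continuousAt_id

theorem IsOriginBody.exists_lipschitzOnWith_radialProj (hK : IsOriginBody K) (hx : x ≠ 0) :
    ∃ C : NNReal, ∃ t ∈ 𝓝 x, LipschitzOnWith C (radialProj K) t := by
  obtain ⟨C, hC⟩ := hK.convex.lipschitz_gauge hK.mem_nhds_zero
  have hF : ContDiffAt ℝ 1 (fun p : ℝ × E => p.1⁻¹ • p.2) (gauge K x, x) :=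
    (contDiffAt_fst.inv (hK.gauge_pos hx).ne').smul contDiffAt_snd
  obtain ⟨D, t, ht, hD⟩ := hF.exists_lipschitzOnWith
  have hpair : LipschitzWith (max C 1) fun y => (gauge K y, y) := hC.prodMk LipschitzWith.id
  exact ⟨D * max C 1, _, hpair.continuous.continuousAt ht,
    hD.comp hpair.lipschitzOnWith fun _ hy => hy⟩

theorem IsOriginBody.exists_eventually_norm_sub_le_mul_hyperplaneProj (hK : IsOriginBody K)
    (hx : x ∈ frontier K) (hxu : ⟪x, u⟫ = 1) :
    ∃ C : ℝ, ∀ᶠ p in 𝓝[frontier K] x ×ˢ 𝓝[frontier K] x,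
      ‖p.1 - p.2‖ ≤ C * ‖hyperplaneProj u p.1 - hyperplaneProj u p.2‖ := by
  obtain ⟨C, t, ht, hC⟩ := hK.exists_lipschitzOnWith_radialProj (hK.ne_zero_of_mem_frontier hx)
  have hproj : hyperplaneProj u x = x := by rw [hyperplaneProj, hxu, inv_one, one_smul]
  have hcont : Tendsto (hyperplaneProj u) (𝓝 x) (𝓝 x) := by
    simpa only [ContinuousAt, hproj] using
      continuousAt_hyperplaneProj (u := u) (x := x) (by simp [hxu])
  have hinner : Tendsto (fun y => ⟪y, u⟫) (𝓝 x) (𝓝 1) :=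
    hxu ▸ (continuous_id.inner continuous_const).tendsto x
  have hnear : ∀ᶠ y in 𝓝[frontier K] x, radialProj K (hyperplaneProj u y) = y ∧
      hyperplaneProj u y ∈ t := by
    filter_upwards [nhdsWithin_le_nhds (hcont ht), self_mem_nhdsWithin,
      nhdsWithin_le_nhds (hinner.eventually_const_lt one_pos)] with y hyt hy hyu
    exact ⟨hK.radialProj_hyperplaneProj hy hyu, hyt⟩
  refine ⟨C, ?_⟩
  filter_upwards [hnear.prod_mk hnear] with ⟨y, z⟩ ⟨⟨hy, hyt⟩, hz, hzt⟩
  simpa only [dist_eq_norm, hy, hz] using hC.dist_le_mul _ hyt _ hzt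

variable [FiniteDimensional ℝ E] [MeasurableSpace E] [BorelSpace E] {m : ℕ} {κ : ℝ≥0∞}

theorem IsOriginBody.measurableSet_hyperplaneProj_image (hK : IsOriginBody K)
    (hA : MeasurableSet A) (hAK : A ⊆ frontier K) (hpos : ∀ a ∈ A, 0 < ⟪a, u⟫) :
    MeasurableSet (hyperplaneProj u '' A) :=
  hA.image_of_continuousOn_injOn
    (fun a ha => (continuousAt_hyperplaneProj (hpos a ha).ne').continuousWithinAt)
    (LeftInvOn.injOn fun a ha => hK.radialProj_hyperplaneProj (hAK ha) (hpos a ha))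

theorem IsOriginBody.coneVolume_le (hK : IsOriginBody K) (hm : Module.finrank ℝ E = m + 1)
    (hA : MeasurableSet A) (hc : 0 ≤ c) (hAc : ∀ a ∈ A, ⟪a, u⟫ ∈ Ioc 0 c) :
    coneVolume K A ≤
      ENNReal.ofReal (c ^ (m + 1)) * volume (hyperplaneCone u (hyperplaneProj u '' A)) := by
  rw [hK.coneVolume_apply hA, ← abs_of_nonneg (pow_nonneg hc (m + 1)), ← hm,
    ← Measure.addHaar_smul]
  exact measure_mono (hK.radialProj_preimage_inter_subset_smul_hyperplaneCone hAc)

theorem IsOriginBody.volume_hyperplaneCone_le (hK : IsOriginBody K)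
    (hm : Module.finrank ℝ E = m + 1) (hA : MeasurableSet A) (hAK : A ⊆ frontier K) (hc : 0 < c)
    (hAc : ∀ a ∈ A, c⁻¹ ≤ ⟪a, u⟫) :
    volume (hyperplaneCone u (hyperplaneProj u '' A)) ≤
      ENNReal.ofReal (c ^ (m + 1)) * coneVolume K A := by
  rw [hK.coneVolume_apply hA, ← abs_of_nonneg (pow_nonneg hc.le (m + 1)), ← hm,
    ← Measure.addHaar_smul]
  exact measure_mono (hK.hyperplaneCone_subset_smul_radialProj_preimage_inter hAK hc hAc)

namespace IsOriginBody

theorem norm_mul_coneVolume_le (hK : IsOriginBody K) (hm : Module.finrank ℝ E = m + 1)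
    (hκ : IsConeRatio E m κ) (hu : u ≠ 0) (hA : MeasurableSet A) (hAK : A ⊆ frontier K)
    (hc : 0 ≤ c) (hAc : ∀ a ∈ A, ⟪a, u⟫ ∈ Ioc 0 c)
    (hlip : ∀ x ∈ A, ∀ y ∈ A, ‖hyperplaneProj u x - hyperplaneProj u y‖ ≤ c * ‖x - y‖) :
    ENNReal.ofReal ‖u‖ * coneVolume K A ≤ ENNReal.ofReal (c ^ (2 * m + 1)) * (κ * μH[m] A) := by
  have himage := hK.measurableSet_hyperplaneProj_image hA hAK fun a ha => (hAc a ha).1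
  calc ENNReal.ofReal ‖u‖ * coneVolume K A
      ≤ ENNReal.ofReal ‖u‖ * (ENNReal.ofReal (c ^ (m + 1)) *
          volume (hyperplaneCone u (hyperplaneProj u '' A))) := by
        gcongr
        exact hK.coneVolume_le hm hA hc hAc
    _ = ENNReal.ofReal (c ^ (m + 1)) * (κ * μH[m] (hyperplaneProj u '' A)) := by
        rw [mul_left_comm, hκ u _ hu himage]
        rintro _ ⟨a, ha, rfl⟩
        exact inner_hyperplaneProj (hAc a ha).1.ne'
    _ ≤ ENNReal.ofReal (c ^ (m + 1)) * (κ * (ENNReal.ofReal (c ^ m) * μH[m] A)) := by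
        gcongr
        exact hausdorffMeasure_image_le_ofReal_pow_mul m hc
          (by simpa only [dist_eq_norm] using hlip)
    _ = _ := by
        rw [mul_left_comm κ, ← mul_assoc, ← ENNReal.ofReal_mul (by positivity), ← pow_add]
        ring_nf

theorem mul_hausdorffMeasure_le (hK : IsOriginBody K) (hm : Module.finrank ℝ E = m + 1)
    (hκ : IsConeRatio E m κ) (hu : u ≠ 0) (hA : MeasurableSet A) (hAK : A ⊆ frontier K)
    (hc : 0 < c) (hAc : ∀ a ∈ A, c⁻¹ ≤ ⟪a, u⟫)
    (hlip : ∀ x ∈ A, ∀ y ∈ A, ‖x - y‖ ≤ c * ‖hyperplaneProj u x - hyperplaneProj u y‖) :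
    κ * μH[m] A ≤ ENNReal.ofReal (c ^ (2 * m + 1)) * (ENNReal.ofReal ‖u‖ * coneVolume K A) := by
  have hpos : ∀ a ∈ A, 0 < ⟪a, u⟫ := fun a ha => (inv_pos.2 hc).trans_le (hAc a ha)
  calc κ * μH[m] A
      ≤ κ * (ENNReal.ofReal (c ^ m) * μH[m] (hyperplaneProj u '' A)) := by
        gcongr
        exact hausdorffMeasure_le_ofReal_pow_mul_image m hc.le
          (by simpa only [dist_eq_norm] using hlip)
    _ = ENNReal.ofReal (c ^ m) *
          (ENNReal.ofReal ‖u‖ * volume (hyperplaneCone u (hyperplaneProj u '' A))) := by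
        rw [mul_left_comm, hκ u _ hu (hK.measurableSet_hyperplaneProj_image hA hAK hpos)]
        rintro _ ⟨a, ha, rfl⟩
        exact inner_hyperplaneProj (hpos a ha).ne'
    _ ≤ ENNReal.ofReal (c ^ m) *
          (ENNReal.ofReal ‖u‖ * (ENNReal.ofReal (c ^ (m + 1)) * coneVolume K A)) := by
        gcongr
        exact hK.volume_hyperplaneCone_le hm hA hAK hc hAc
    _ = _ := by
        rw [mul_left_comm (ENNReal.ofReal ‖u‖), ← mul_assoc,
          ← ENNReal.ofReal_mul (by positivity), ← pow_add]
        ring_nf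

theorem exists_nhdsWithin_mul_hausdorffMeasure_le (hK : IsOriginBody K)
    (hm : Module.finrank ℝ E = m + 1) (hκ : IsConeRatio E m κ) (hx : x ∈ frontier K) :
    ∃ C : ℝ≥0∞, ∃ U ∈ 𝓝[frontier K] x, ∀ A ⊆ U, MeasurableSet A →
      κ * μH[m] A ≤ C * coneVolume K A := by
  have hx0 := hK.ne_zero_of_mem_frontier hx
  set u := (‖x‖ ^ 2)⁻¹ • x
  have hxu : ⟪x, u⟫ = 1 := by
    rw [real_inner_smul_right, real_inner_self_eq_norm_sq]
    exact inv_mul_cancel₀ (by positivity)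
  have hu : u ≠ 0 := smul_ne_zero (by positivity) hx0
  obtain ⟨C, hC⟩ := hK.exists_eventually_norm_sub_le_mul_hyperplaneProj hx hxu
  obtain ⟨V, hV, hVC⟩ := eventually_prod_self_iff'.1 hC
  have hinner : ∀ᶠ y in 𝓝[frontier K] x, 2⁻¹ < ⟪y, u⟫ := by
    refine nhdsWithin_le_nhds (Tendsto.eventually_const_lt (v := 1) (by norm_num) ?_)
    exact hxu ▸ (continuous_id.inner continuous_const).tendsto x
  refine ⟨ENNReal.ofReal (max C 2 ^ (2 * m + 1)) * ENNReal.ofReal ‖u‖, _,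
    inter_mem (inter_mem hV hinner) self_mem_nhdsWithin, fun A hAU hA => ?_⟩
  rw [mul_assoc]
  refine hK.mul_hausdorffMeasure_le hm hκ hu hA (fun a ha => (hAU ha).2)
    (lt_max_of_lt_right two_pos) (fun a ha => ?_) fun y hy z hz => ?_
  · exact (inv_anti₀ two_pos (le_max_right C 2)).trans (hAU ha).1.2.le
  · refine (hVC y (hAU hy).1.1 z (hAU hz).1.1).trans ?_
    gcongr
    exact le_max_left C 2

theorem hausdorffMeasure_frontier_sdiff_regularBoundary (hK : IsOriginBody K)
    (hm : Module.finrank ℝ E = m + 1) : μH[m] (frontier K \ regularBoundary K) = 0 := by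
  have : Nontrivial E := Module.nontrivial_of_finrank_pos (R := ℝ) (by lia)
  obtain ⟨κ, hκ0, -, hκ⟩ := exists_isConeRatio hm
  refine measure_null_of_locally_null _ fun x hx => ?_
  obtain ⟨C, U, hU, hUC⟩ := hK.exists_nhdsWithin_mul_hausdorffMeasure_le hm hκ hx.1
  obtain ⟨V, hV, hxV, hVU⟩ := mem_nhdsWithin.1 hU
  have hNmeas : MeasurableSet (V ∩ (frontier K \ regularBoundary K)) :=
    hV.measurableSet.inter
      (isClosed_frontier.measurableSet.diff (measurableSet_regularBoundary K))
  have hNnull : coneVolume K (V ∩ (frontier K \ regularBoundary K)) = 0 :=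
    measure_mono_null (fun y hy => hy.2.2) hK.ae_mem_regularBoundary_coneVolume
  refine ⟨_, inter_mem (nhdsWithin_le_nhds (hV.mem_nhds hxV)) self_mem_nhdsWithin, ?_⟩
  have := hUC _ (fun y hy => hVU ⟨hy.1, hy.2.1⟩) hNmeas
  rw [hNnull, mul_zero, nonpos_iff_eq_zero] at this
  exact (mul_eq_zero.1 this).resolve_left hκ0

theorem coneVolume_le_mul_surfaceMeasure (hK : IsOriginBody K)
    (hm : Module.finrank ℝ E = m + 1) (hκ : IsConeRatio E m κ) (hu : u ≠ 0) (hA : MeasurableSet A)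
    (hAK : A ⊆ frontier K) (hc : 0 < c) (hAc : ∀ a ∈ A, ⟪a, u⟫ ∈ Ioc 0 c)
    (hlip : ∀ x ∈ A, ∀ y ∈ A, ‖hyperplaneProj u x - hyperplaneProj u y‖ ≤ c * ‖x - y‖)
    {g : E → ℝ} (hg : ∀ a ∈ A, c⁻¹ * ‖u‖⁻¹ ≤ g a) :
    coneVolume K A ≤ ENNReal.ofReal (c ^ (2 * m + 2)) * (κ * surfaceMeasure m K g A) := by
  have hu' : 0 < ‖u‖ := norm_pos_iff.2 hu
  calc coneVolume K A
      = ENNReal.ofReal ‖u‖⁻¹ * (ENNReal.ofReal ‖u‖ * coneVolume K A) := by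
        rw [← mul_assoc, ← ENNReal.ofReal_mul (by positivity), inv_mul_cancel₀ hu'.ne',
          ENNReal.ofReal_one, one_mul]
    _ ≤ ENNReal.ofReal ‖u‖⁻¹ * (ENNReal.ofReal (c ^ (2 * m + 1)) * (κ * μH[m] A)) := by
        gcongr ENNReal.ofReal ‖u‖⁻¹ * ?_
        exact hK.norm_mul_coneVolume_le hm hκ hu hA hAK hc.le hAc hlip
    _ = ENNReal.ofReal (c ^ (2 * m + 2)) * (κ * (ENNReal.ofReal (c⁻¹ * ‖u‖⁻¹) * μH[m] A)) := by
        rw [← mul_assoc, ← ENNReal.ofReal_mul (by positivity), mul_left_comm κ,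
          ← mul_assoc (ENNReal.ofReal (c ^ (2 * m + 2))), ← ENNReal.ofReal_mul (by positivity)]
        congr 2
        field_simp
        ring
    _ ≤ _ := by
        gcongr
        exact mul_le_surfaceMeasure hA hAK hg

theorem mul_surfaceMeasure_le_coneVolume (hK : IsOriginBody K)
    (hm : Module.finrank ℝ E = m + 1) (hκ : IsConeRatio E m κ) (hu : u ≠ 0) (hA : MeasurableSet A)
    (hAK : A ⊆ frontier K) (hc : 0 < c) (hAc : ∀ a ∈ A, c⁻¹ ≤ ⟪a, u⟫)
    (hlip : ∀ x ∈ A, ∀ y ∈ A, ‖x - y‖ ≤ c * ‖hyperplaneProj u x - hyperplaneProj u y‖)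
    {g : E → ℝ} (hg : ∀ a ∈ A, g a ≤ c * ‖u‖⁻¹) :
    κ * surfaceMeasure m K g A ≤ ENNReal.ofReal (c ^ (2 * m + 2)) * coneVolume K A := by
  calc κ * surfaceMeasure m K g A
      ≤ κ * (ENNReal.ofReal (c * ‖u‖⁻¹) * μH[m] A) := by
        gcongr
        exact surfaceMeasure_le_mul hA hAK hg
    _ = ENNReal.ofReal (c * ‖u‖⁻¹) * (κ * μH[m] A) := mul_left_comm _ _ _
    _ ≤ ENNReal.ofReal (c * ‖u‖⁻¹) *
          (ENNReal.ofReal (c ^ (2 * m + 1)) * (ENNReal.ofReal ‖u‖ * coneVolume K A)) := by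
        gcongr ENNReal.ofReal (c * ‖u‖⁻¹) * ?_
        exact hK.mul_hausdorffMeasure_le hm hκ hu hA hAK hc hAc hlip
    _ = _ := by
        simp only [← mul_assoc]
        rw [← ENNReal.ofReal_mul (by positivity), ← ENNReal.ofReal_mul (by positivity)]
        congr 2
        field_simp
        ring

end IsOriginBody

namespace IsNormalSelection

variable {ν : E → E}

omit [BorelSpace E] in
theorem exists_nhdsWithin_forall_mem_Icc (hν : IsNormalSelection K ν) (hK : IsOriginBody K)
    (hx : x ∈ regularBoundary K) (hc : 1 < c) :
    ∃ U ∈ 𝓝[frontier K] x, ∀ y ∈ U,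
      ⟪y, ⟪x, ν x⟫⁻¹ • ν x⟫ ∈ Icc c⁻¹ c ∧
        ⟪y, ν y⟫ ∈ Icc (c⁻¹ * ⟪x, ν x⟫) (c * ⟪x, ν x⟫) := by
  have hpos := hK.inner_pos_of_isOuterNormal (hν.norm_eq_one x) (hν.isOuterNormal x hx.1)
  have hc' := inv_lt_one_of_one_lt₀ hc
  have hid : Tendsto id (𝓝[frontier K] x) (𝓝 x) := nhdsWithin_le_nhds
  have hfixed := hid.inner (𝕜 := ℝ) (tendsto_const_nhds (x := ⟪x, ν x⟫⁻¹ • ν x))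
  rw [real_inner_smul_right, inv_mul_cancel₀ hpos.ne'] at hfixed
  exact ⟨_, inter_mem (hfixed (Icc_mem_nhds hc' hc))
    ((hid.inner (𝕜 := ℝ) (hK.tendsto_normalSelection hν hx)) (Icc_mem_nhds
      (mul_lt_of_lt_one_left hpos hc') (lt_mul_of_one_lt_left hpos hc))), fun y hy => hy⟩

theorem exists_nhdsWithin_coneVolume_le_and_le (hν : IsNormalSelection K ν) (hK : IsOriginBody K)
    (hm : Module.finrank ℝ E = m + 1) (hκ : IsConeRatio E m κ) (hx : x ∈ regularBoundary K)
    (hc : 1 < c) :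
    ∃ U ∈ 𝓝[frontier K] x, ∀ A ⊆ U, MeasurableSet A →
      coneVolume K A ≤ ENNReal.ofReal (c ^ (2 * m + 2)) *
        (κ * surfaceMeasure m K (fun y => ⟪y, ν y⟫) A) ∧
      κ * surfaceMeasure m K (fun y => ⟪y, ν y⟫) A ≤
        ENNReal.ofReal (c ^ (2 * m + 2)) * coneVolume K A := by
  have hc0 : 0 < c := one_pos.trans hc
  have hpos := hK.inner_pos_of_isOuterNormal (hν.norm_eq_one x) (hν.isOuterNormal x hx.1)
  obtain ⟨U, hU, hUc⟩ := hν.exists_nhdsWithin_forall_mem_Icc hK hx hc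
  obtain ⟨V, hV, hVc⟩ :=
    eventually_prod_self_iff'.1 (hν.eventually_bilipschitz_hyperplaneProj hK hx hc)
  set u := ⟪x, ν x⟫⁻¹ • ν x
  have hnorm : ‖u‖⁻¹ = ⟪x, ν x⟫ := by
    rw [norm_smul, hν.norm_eq_one, mul_one, norm_inv, inv_inv, Real.norm_of_nonneg hpos.le]
  have hu : u ≠ 0 := norm_pos_iff.1 (inv_pos.1 (hnorm ▸ hpos))
  rw [← hnorm] at hUc
  refine ⟨_, inter_mem (inter_mem hU hV) self_mem_nhdsWithin, fun A hAU hA => ⟨?_, ?_⟩⟩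
  · exact hK.coneVolume_le_mul_surfaceMeasure hm hκ hu hA (fun a ha => (hAU ha).2) hc0
      (fun a ha => Icc_subset_Ioc_left (inv_pos.2 hc0) (hUc a (hAU ha).1.1).1)
      (fun y hy z hz => (hVc y (hAU hy).1.2 z (hAU hz).1.2).1)
      fun a ha => (hUc a (hAU ha).1.1).2.1
  · exact hK.mul_surfaceMeasure_le_coneVolume hm hκ hu hA (fun a ha => (hAU ha).2) hc0
      (fun a ha => (hUc a (hAU ha).1.1).1.1)
      (fun y hy z hz => (hVc y (hAU hy).1.2 z (hAU hz).1.2).2)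
      fun a ha => (hUc a (hAU ha).1.1).2.2

theorem coneVolume_eq_smul_surfaceMeasure (hν : IsNormalSelection K ν) (hK : IsOriginBody K)
    (hm : Module.finrank ℝ E = m + 1) (hκ : IsConeRatio E m κ) :
    coneVolume K = κ • surfaceMeasure m K fun x => ⟪x, ν x⟫ := by
  have : Nontrivial E := Module.nontrivial_of_finrank_pos (R := ℝ) (by lia)
  have hreg := measurableSet_regularBoundary K
  have hle : ∀ {x}, x ∈ regularBoundary K → 𝓝[regularBoundary K] x ≤ 𝓝[frontier K] x :=
    fun _ => nhdsWithin_mono _ fun _ hy => hy.1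
  have hnull : (κ • surfaceMeasure m K fun x => ⟪x, ν x⟫) (regularBoundary K)ᶜ = 0 := by
    rw [Measure.smul_apply, surfaceMeasure, withDensity_absolutelyContinuous _ _ ?_, smul_zero]
    rw [Measure.restrict_apply hreg.compl, inter_comm]
    exact hK.hausdorffMeasure_frontier_sdiff_regularBoundary hm
  refine le_antisymm ?_ ?_ <;>
    refine Measure.le_intro fun A hA _ => le_of_forall_le_ofReal_pow_mul (2 * m + 2) fun c hc => ?_
  · refine measure_le_of_locally_le (M₂ := ENNReal.ofReal (c ^ (2 * m + 2)) • κ • _) hreg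
      hK.ae_mem_regularBoundary_coneVolume (fun x hx => ?_) A
    obtain ⟨U, hU, hUc⟩ := hν.exists_nhdsWithin_coneVolume_le_and_le hK hm hκ hx hc
    exact ⟨U, hle hx hU, fun A hAU hA => (hUc A hAU hA).1⟩
  · refine measure_le_of_locally_le (M₂ := ENNReal.ofReal (c ^ (2 * m + 2)) • coneVolume K) hreg
      hnull (fun x hx => ?_) A
    obtain ⟨U, hU, hUc⟩ := hν.exists_nhdsWithin_coneVolume_le_and_le hK hm hκ hx hc
    exact ⟨U, hle hx hU, fun A hAU hA => (hUc A hAU hA).2⟩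

theorem hausdorffMeasure_frontier_ne_top (hν : IsNormalSelection K ν) (hK : IsOriginBody K)
    (hm : Module.finrank ℝ E = m + 1) : μH[m] (frontier K) ≠ ∞ := by
  obtain ⟨κ, hκ0, -, hκ⟩ := exists_isConeRatio hm
  have := hK.isFiniteMeasure_coneVolume
  obtain ⟨r, hr, hrK⟩ := nhds_basis_closedBall.mem_iff.1 hK.mem_nhds_zero
  have hsurf := mul_le_surfaceMeasure (m := m) (K := K) (A := frontier K) (c := r)
    (g := fun x => ⟪x, ν x⟫) isClosed_frontier.measurableSet subset_rfl fun x hx =>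
      (hν.isOuterNormal x hx).le_inner_of_closedBall_subset (hν.norm_eq_one x) hr.le hrK
  have hfinite : κ * surfaceMeasure m K (fun x => ⟪x, ν x⟫) (frontier K) ≠ ∞ := by
    rw [← smul_eq_mul, ← Measure.smul_apply, ← hν.coneVolume_eq_smul_surfaceMeasure hK hm hκ]
    exact measure_ne_top _ _
  intro htop
  rw [htop, ENNReal.mul_top (by simpa using hr), top_le_iff] at hsurf
  exact hfinite (by rw [hsurf, ENNReal.mul_top hκ0])

end IsNormalSelection
end ConeVolume

/-! ### Support functions and Wulff shapes -/

section WulffShape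

variable {E : Type*} [NormedAddCommGroup E] [InnerProductSpace ℝ E]

/-- The support function of a set in an arbitrary inner product space; on `EuclideanSpace` it is
`supportFn` by definition. -/
noncomputable def supportFun (K : Set E) (v : E) : ℝ :=
  sSup ((fun y => ⟪y, v⟫) '' K)

/-- The Wulff shape (Aleksandrov body) of `g`, of which only the values on the unit sphere
matter. -/
def wulffShape (g : E → ℝ) : Set E :=
  {x | ∀ v, ‖v‖ = 1 → ⟪x, v⟫ ≤ g v}

variable {K : Set E} {f g : E → ℝ} {x y v : E} {a r t C R : ℝ}

theorem inner_le_supportFun (hK : IsCompact K) (hy : y ∈ K) (v : E) : ⟪y, v⟫ ≤ supportFun K v :=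
  le_csSup (hK.image (by fun_prop)).bddAbove (mem_image_of_mem _ hy)

theorem supportFun_le (hK : K.Nonempty) (h : ∀ y ∈ K, ⟪y, v⟫ ≤ a) : supportFun K v ≤ a :=
  csSup_le (hK.image _) (forall_mem_image.2 h)

theorem supportFun_neg_right (K : Set E) (v : E) : supportFun K (-v) = supportFun (-K) v := by
  rw [supportFun, supportFun, ← image_neg_eq_neg, image_image]
  simp only [inner_neg_left, inner_neg_right]

theorem supportFun_smul (ha : 0 ≤ a) (K : Set E) (v : E) :
    supportFun (a • K) v = a * supportFun K v := by
  rw [supportFun, supportFun, ← smul_eq_mul, ← Real.sSup_smul_of_nonneg ha, ← image_smul,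
    image_image, ← image_smul, image_image]
  simp only [real_inner_smul_left, smul_eq_mul]

theorem supportFun_le_mul_norm (hK : K.Nonempty) (hKR : K ⊆ closedBall 0 R) (v : E) :
    supportFun K v ≤ R * ‖v‖ := by
  refine supportFun_le hK fun y hy => (real_inner_le_norm y v).trans ?_
  gcongr
  simpa using hKR hy

theorem le_supportFun_of_closedBall_subset (hK : IsCompact K) (hr : 0 ≤ r)
    (hrK : closedBall 0 r ⊆ K) (hv : ‖v‖ = 1) : r ≤ supportFun K v := by
  have := inner_le_supportFun hK (hrK (by simp [norm_smul, hv, abs_of_nonneg hr] :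
    r • v ∈ closedBall 0 r)) v
  rwa [real_inner_smul_left, real_inner_self_eq_norm_sq, hv, one_pow, mul_one] at this

theorem continuous_supportFun (hK : IsCompact K) (hne : K.Nonempty) :
    Continuous (supportFun K) := by
  obtain ⟨R, hR, hKR⟩ := hK.isBounded.subset_closedBall_lt 0 0
  refine (LipschitzWith.of_le_add_mul R.toNNReal fun v w =>
    supportFun_le hne fun y hy => ?_).continuous
  calc ⟪y, v⟫ = ⟪y, w⟫ + ⟪y, v - w⟫ := by rw [← inner_add_right, add_sub_cancel]
    _ ≤ supportFun K w + ‖y‖ * ‖v - w‖ :=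
      add_le_add (inner_le_supportFun hK hy w) (real_inner_le_norm _ _)
    _ ≤ supportFun K w + R.toNNReal * dist v w := by
      rw [dist_eq_norm, Real.coe_toNNReal _ hR.le]
      gcongr
      simpa using hKR hy

theorem IsOuterNormal.supportFun_eq (hK : IsCompact K) (hx : x ∈ K) (hxv : IsOuterNormal K x v) :
    supportFun K v = ⟪x, v⟫ :=
  (supportFun_le ⟨x, hx⟩ hxv).antisymm (inner_le_supportFun hK hx v)

theorem isClosed_wulffShape (g : E → ℝ) : IsClosed (wulffShape g) := by
  simp only [wulffShape, ofPred_forall]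
  exact isClosed_iInter fun v => isClosed_iInter fun _ =>
    isClosed_le (by fun_prop) continuous_const

theorem convex_wulffShape (g : E → ℝ) : Convex ℝ (wulffShape g) := by
  intro x hx y hy a b ha hb hab v hv
  rw [inner_add_left, real_inner_smul_left, real_inner_smul_left]
  calc a * ⟪x, v⟫ + b * ⟪y, v⟫ ≤ a * g v + b * g v := by
        gcongr
        exacts [hx v hv, hy v hv]
    _ = g v := by rw [← add_mul, hab, one_mul]

theorem neg_wulffShape (hg : ∀ v, g (-v) = g v) : -wulffShape g = wulffShape g := by
  ext x
  refine ⟨fun hx v hv => ?_, fun hx v hv => ?_⟩ <;>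
  · have := hx (-v) (by rwa [norm_neg])
    simpa [hg] using this

theorem supportFun_wulffShape_le (hne : (wulffShape g).Nonempty) (hv : ‖v‖ = 1) :
    supportFun (wulffShape g) v ≤ g v :=
  supportFun_le hne fun _ hy => hy v hv

theorem supportFun_smul_wulffShape_le (hg : IsCompact (wulffShape g)) (h0 : 0 ∈ wulffShape g)
    (ha : a ∈ Icc (0 : ℝ) 1) (hv : ‖v‖ = 1) : supportFun (a • wulffShape g) v ≤ g v := by
  have hnonneg := inner_le_supportFun hg h0 v
  rw [inner_zero_left] at hnonneg
  calc supportFun (a • wulffShape g) v = a * supportFun (wulffShape g) v :=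
        supportFun_smul ha.1 _ v
    _ ≤ supportFun (wulffShape g) v := mul_le_of_le_one_left hnonneg ha.2
    _ ≤ g v := supportFun_wulffShape_le ⟨0, h0⟩ hv

theorem closedBall_subset_wulffShape (hg : ∀ v, ‖v‖ = 1 → r ≤ g v) :
    closedBall 0 r ⊆ wulffShape g := fun x hx v hv => by
  calc ⟪x, v⟫ ≤ ‖x‖ * ‖v‖ := real_inner_le_norm x v
    _ ≤ g v := by simpa [hv] using (mem_closedBall_zero_iff.1 hx).trans (hg v hv)

theorem wulffShape_subset_closedBall (hR : 0 ≤ R) (hg : ∀ v, ‖v‖ = 1 → g v ≤ R) :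
    wulffShape g ⊆ closedBall 0 R := fun x hx => by
  rcases eq_or_ne x 0 with rfl | h0
  · simpa using hR
  · have hn : ‖x‖ ≠ 0 := norm_ne_zero_iff.2 h0
    have hv : ‖‖x‖⁻¹ • x‖ = 1 := by rw [norm_smul, norm_inv, norm_norm, inv_mul_cancel₀ hn]
    have := (hx _ hv).trans (hg _ hv)
    rw [real_inner_smul_right, real_inner_self_eq_norm_mul_norm, inv_mul_cancel_left₀ hn] at this
    simpa using this

theorem isOriginBody_wulffShape [FiniteDimensional ℝ E] (hr : 0 < r)
    (hg : ∀ v, ‖v‖ = 1 → g v ∈ Icc r R) (hR : 0 ≤ R) : IsOriginBody (wulffShape g) where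
  isCompact := isCompact_of_isClosed_isBounded (isClosed_wulffShape g)
    (isBounded_closedBall.subset (wulffShape_subset_closedBall hR fun v hv => (hg v hv).2))
  convex := convex_wulffShape g
  zero_mem_interior := mem_interior_iff_mem_nhds.2 <| mem_of_superset (closedBall_mem_nhds 0 hr)
    (closedBall_subset_wulffShape fun v hv => (hg v hv).1)

theorem smul_mem_wulffShape_supportFun_add (hK : IsCompact K) (hr : 0 < r)
    (hrK : closedBall 0 r ⊆ K) (hf : ∀ v, ‖v‖ = 1 → |f v| ≤ C) (ht : 0 ≤ t) (htC : t * C ≤ r)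
    (hx : x ∈ K) : (1 - t * (C / r)) • x ∈ wulffShape fun v => supportFun K v + t * f v := by
  intro v hv
  have hC : 0 ≤ C := (abs_nonneg _).trans (hf v hv)
  have hle : 0 ≤ 1 - t * (C / r) := by
    rw [← mul_div_assoc, sub_nonneg]
    exact div_le_one_of_le₀ htC hr.le
  have hCr : C ≤ C / r * supportFun K v := by
    calc C = C / r * r := by field_simp
      _ ≤ _ := by gcongr; exact le_supportFun_of_closedBall_subset hK hr.le hrK hv
  calc ⟪(1 - t * (C / r)) • x, v⟫ = (1 - t * (C / r)) * ⟪x, v⟫ := real_inner_smul_left ..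
    _ ≤ (1 - t * (C / r)) * supportFun K v := by gcongr; exact inner_le_supportFun hK hx v
    _ = supportFun K v - t * (C / r * supportFun K v) := by ring
    _ ≤ supportFun K v - t * C := by gcongr
    _ ≤ supportFun K v + t * f v := by
      have := mul_le_mul_of_nonneg_left (neg_le_of_abs_le (hf v hv)) ht
      linarith

namespace IsOriginBody

theorem continuous_supportFun (hK : IsOriginBody K) : Continuous (supportFun K) :=
  _root_.continuous_supportFun hK.isCompact ⟨0, hK.zero_mem⟩

theorem inner_lt_supportFun (hK : IsOriginBody K) {w : E} (hx : x ∈ regularBoundary K)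
    (hv : ‖v‖ = 1) (hw : ‖w‖ = 1) (hxv : IsOuterNormal K x v) (hne : w ≠ v) :
    ⟪x, w⟫ < supportFun K w := by
  refine (inner_le_supportFun hK.isCompact (hK.frontier_subset hx.1) w).lt_of_ne fun heq => hne ?_
  exact hK.eq_of_isOuterNormal hx hw hv
    (fun y hy => heq ▸ inner_le_supportFun hK.isCompact hy w) hxv

theorem exists_supportFun_mem_Icc (hK : IsOriginBody K) :
    ∃ r R, 0 < r ∧ 0 < R ∧ ∀ v, ‖v‖ = 1 → supportFun K v ∈ Icc r R := by
  obtain ⟨r, hr, hrK⟩ := nhds_basis_closedBall.mem_iff.1 hK.mem_nhds_zero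
  obtain ⟨R, hR, hKR⟩ := hK.isCompact.isBounded.subset_closedBall_lt 0 0
  refine ⟨r, R, hr, hR, fun v hv =>
    ⟨le_supportFun_of_closedBall_subset hK.isCompact hr.le hrK hv, ?_⟩⟩
  simpa [hv] using supportFun_le_mul_norm ⟨0, hK.zero_mem⟩ hKR v

variable [FiniteDimensional ℝ E]

theorem eventually_isOriginBody_wulffShape (hK : IsOriginBody K) (hf : Continuous f) :
    ∀ᶠ t in 𝓝 (0 : ℝ), IsOriginBody (wulffShape fun v => supportFun K v + t * f v) := by
  obtain ⟨r, R, hr, hR, hrR⟩ := hK.exists_supportFun_mem_Icc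
  obtain ⟨C, hC⟩ := (isCompact_sphere (0 : E) 1).exists_bound_of_continuousOn hf.continuousOn
  filter_upwards [ball_mem_nhds (0 : ℝ) (by positivity : 0 < r / (2 * (|C| + 1)))] with t ht
  exact isOriginBody_wulffShape (half_pos hr) (fun v hv => add_mul_mem_Icc_half hr (hrR v hv)
    (hC v (by simpa using hv)) (by simpa using ht)) (by positivity : 0 ≤ R + r / 2)

theorem eventually_smul_mem_wulffShape (hK : IsOriginBody K) (hf : Continuous f)
    (hx : x ∈ regularBoundary K) (hv : ‖v‖ = 1) (hxv : IsOuterNormal K x v)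
    (ha : a < f v / ⟪x, v⟫) :
    ∀ᶠ t in 𝓝[>] (0 : ℝ), (1 + t * a) • x ∈ wulffShape fun v => supportFun K v + t * f v := by
  have hcont := hK.continuous_supportFun
  have hle : ∀ w, ⟪x, w⟫ ≤ supportFun K w :=
    inner_le_supportFun hK.isCompact (hK.frontier_subset hx.1)
  rw [lt_div_iff₀ (hK.inner_pos_of_isOuterNormal hv hxv)] at ha
  -- Only directions in this compact set can fail; it avoids `v`, so `h_K - ⟪x, ·⟫ > 0` on it.
  let S : Set E := sphere 0 1 ∩ {w | f w ≤ a * ⟪x, w⟫}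
  have hS : IsCompact S := (isCompact_sphere 0 1).inter_right (isClosed_le hf (by fun_prop))
  have hpos : ∀ w ∈ S, 0 < supportFun K w - ⟪x, w⟫ := fun w hw => by
    refine sub_pos.2 (hK.inner_lt_supportFun hx hv (by simpa using hw.1) hxv ?_)
    rintro rfl
    exact hw.2.not_gt ha
  have hgap : ∀ᶠ t in 𝓝 (0 : ℝ), ∀ w ∈ S,
      0 < supportFun K w - ⟪x, w⟫ - t * (a * ⟪x, w⟫ - f w) := by
    refine hS.eventually_forall_of_forall_eventually fun w hw => ?_
    refine continuous_const.continuousAt.eventually_lt (by fun_prop) ?_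
    simpa using hpos w hw
  filter_upwards [hgap.filter_mono nhdsWithin_le_nhds, self_mem_nhdsWithin] with t ht ht0 w hw
  rw [real_inner_smul_left]
  by_cases hwS : f w ≤ a * ⟪x, w⟫
  · linarith [ht w ⟨by simpa using hw, hwS⟩]
  · linarith [hle w, mul_lt_mul_of_pos_left (not_le.1 hwS) ht0]

end IsOriginBody
end WulffShape

/-! ### Weighted surface area measures -/

section Variation

variable {E : Type*} [NormedAddCommGroup E] [InnerProductSpace ℝ E] [MeasurableSpace E]
  [BorelSpace E] {K : Set E} {ν : E → E} {ω f : E → ℝ} {m : ℕ} {y : E} {κ : ℝ≥0∞}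

/-- The pushforward of the measure `ω dH^m` on `∂K` under the normal selection `ν`. For `ω = 1` it
is the surface area measure of `K`, and it is the first variation of `∫_K ω`. -/
noncomputable def weightedSurfaceAreaMeasure (m : ℕ) (K : Set E) (ν : E → E) (ω : E → ℝ) :
    Measure E :=
  (surfaceMeasure m K ω).map ν

omit [InnerProductSpace ℝ E] in
theorem map_neg_surfaceMeasure (hK : K = -K) (hω : ∀ x, ω (-x) = ω x) :
    (surfaceMeasure m K ω).map Neg.neg = surfaceMeasure m K ω := by
  have hfrontier : Neg.neg ⁻¹' frontier K = frontier K :=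
    ((Homeomorph.neg E).preimage_frontier K).trans (congrArg frontier hK.symm)
  have hneg := (Homeomorph.neg E).measurableEmbedding
  have hpres := ((IsometryEquiv.neg E).measurePreserving_hausdorffMeasure m).restrict_preimage_emb
    hneg (frontier K)
  refine map_withDensity_of_comp_eq ?_ hneg fun x => by rw [hω]
  convert! hpres using 2
  exact hfrontier.symm

variable [FiniteDimensional ℝ E]

/-- The densities `ω` for which `∫_K ω` is differentiated below. The origin is exempt so that
densities singular there are admitted. -/
structure IsWeight (ω : E → ℝ) : Prop where
  continuousOn : ContinuousOn ω {0}ᶜ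
  pos : ∀ x ≠ 0, 0 < ω x
  integrable : Integrable ω

theorem IsWeight.measurable (hω : IsWeight ω) : Measurable ω :=
  measurable_of_continuousOn_compl_singleton 0 hω.continuousOn

theorem IsWeight.continuousOn_radial (hω : IsWeight ω) (m : ℕ) :
    ContinuousOn (fun p : ℝ × E => (m + 1) * p.1 ^ m * ω (p.1 • p.2)) (Ioi 0 ×ˢ {0}ᶜ) := by
  refine .mul (by fun_prop) (hω.continuousOn.comp (by fun_prop) fun p hp => ?_)
  exact smul_ne_zero (ne_of_gt hp.1) hp.2

theorem IsWeight.intervalIntegrable_radial (hω : IsWeight ω) (hy : y ≠ 0) {a b : ℝ} (ha : 0 < a)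
    (hb : 0 < b) : IntervalIntegrable (fun r => (m + 1) * r ^ m * ω (r • y)) volume a b := by
  refine ContinuousOn.intervalIntegrable ?_
  refine (hω.continuousOn_radial m).comp (f := fun r => (r, y)) (by fun_prop) fun r hr => ⟨?_, hy⟩
  exact (lt_min ha hb).trans_le hr.1

theorem IsWeight.monotoneOn_integral_radialMeasure (hω : IsWeight ω) (hy : y ≠ 0) :
    MonotoneOn (fun s => ∫ r in 1..s, ω (r • y) ∂radialMeasure m) (Ioi 0) := by
  intro a ha b hb hab
  rw [mem_Ioi] at ha hb
  simp only [intervalIntegral_radialMeasure one_pos, ha, hb]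
  rw [← sub_nonneg, intervalIntegral.integral_interval_sub_left
    (hω.intervalIntegrable_radial hy one_pos hb) (hω.intervalIntegrable_radial hy one_pos ha)]
  refine intervalIntegral.integral_nonneg hab fun r hr => ?_
  have hr0 : 0 < r := ha.trans_le hr.1
  have := hω.pos _ (smul_ne_zero hr0.ne' hy)
  positivity

theorem IsWeight.hasDerivAt_integral_radialMeasure (hω : IsWeight ω) (hy : y ≠ 0) :
    HasDerivAt (fun s => ∫ r in 1..s, ω (r • y) ∂radialMeasure m) ((m + 1) * ω y) 1 := by
  have hcont : ContinuousOn (fun r : ℝ => (m + 1) * r ^ m * ω (r • y)) (Ioi 0) :=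
    (hω.continuousOn_radial m).comp (f := fun r => (r, y)) (by fun_prop) fun r hr => ⟨hr, hy⟩
  have hderiv := intervalIntegral.integral_hasDerivAt_right
    (hω.intervalIntegrable_radial (m := m) hy one_pos one_pos)
    (hcont.stronglyMeasurableAtFilter isOpen_Ioi 1 (mem_Ioi.2 one_pos))
    (hcont.continuousAt (Ioi_mem_nhds one_pos))
  simp only [one_pow, mul_one, one_smul] at hderiv
  refine hderiv.congr_of_eventuallyEq ?_
  filter_upwards [Ioi_mem_nhds one_pos] with s hs
  exact intervalIntegral_radialMeasure one_pos hs _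

theorem IsWeight.tendsto_inv_mul_integral_radialMeasure (hω : IsWeight ω) (hy : y ≠ 0) (a : ℝ) :
    Tendsto (fun t => t⁻¹ * ∫ r in 1..(1 + t * a), ω (r • y) ∂radialMeasure m) (𝓝[>] 0)
      (𝓝 ((m + 1) * ω y * a)) := by
  have hline : HasDerivAt (fun t : ℝ => 1 + t * a) a 0 := by
    simpa using ((hasDerivAt_id (0 : ℝ)).mul_const a).const_add 1
  have hderiv := HasDerivAt.comp_of_eq 0 (hω.hasDerivAt_integral_radialMeasure (m := m) hy) hline
    (by simp)
  simpa using hderiv.tendsto_slope_zero_right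

theorem IsWeight.exists_le_integral_radialMeasure (hω : IsWeight ω) {A : Set E}
    (hA : IsCompact A) (hA0 : 0 ∉ A) (m : ℕ) : ∃ B, ∀ y ∈ A, ∀ s ∈ Icc (1 / 2 : ℝ) 1,
      -B * (1 - s) ≤ ∫ r in 1..s, ω (r • y) ∂radialMeasure m := by
  have hsub : Icc (1 / 2 : ℝ) 1 ×ˢ A ⊆ Ioi 0 ×ˢ {0}ᶜ :=
    prod_mono (fun r hr => (by norm_num : (0 : ℝ) < 1 / 2).trans_le hr.1)
      (subset_compl_singleton_iff.2 hA0)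
  obtain ⟨B, hB⟩ := (isCompact_Icc.prod hA).exists_bound_of_continuousOn
    ((hω.continuousOn_radial m).mono hsub)
  refine ⟨B, fun y hy s hs => ?_⟩
  rw [intervalIntegral_radialMeasure one_pos (by linarith [hs.1])]
  have hle := intervalIntegral.norm_integral_le_of_norm_le_const
    (f := fun r => (m + 1) * r ^ m * ω (r • y)) (a := 1) (b := s) (C := B) fun r hr => by
      rw [uIoc_of_ge hs.2] at hr
      exact hB (r, y) ⟨⟨hs.1.trans hr.1.le, hr.2⟩, hy⟩
  rw [Real.norm_eq_abs, abs_sub_comm s 1, abs_of_nonneg (sub_nonneg.2 hs.2)] at hle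
  linarith [neg_abs_le (∫ r in 1..s, (m + 1) * r ^ m * ω (r • y))]

namespace IsNormalSelection

theorem isFiniteMeasure_weightedSurfaceAreaMeasure (hν : IsNormalSelection K ν)
    (hK : IsOriginBody K) (hm : Module.finrank ℝ E = m + 1) (hω : IsWeight ω) :
    IsFiniteMeasure (weightedSurfaceAreaMeasure m K ν ω) := by
  obtain ⟨C, hC⟩ := (hK.isCompact.of_isClosed_subset isClosed_frontier
    hK.frontier_subset).exists_bound_of_continuousOn
      (hω.continuousOn.mono fun x hx => hK.ne_zero_of_mem_frontier hx)
  have hle : surfaceMeasure m K ω (frontier K) ≤ ENNReal.ofReal C * μH[m] (frontier K) :=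
    surfaceMeasure_le_mul isClosed_frontier.measurableSet subset_rfl
      fun x hx => (le_abs_self _).trans (hC x hx)
  refine ⟨?_⟩
  rw [weightedSurfaceAreaMeasure, Measure.map_apply hν.measurable .univ, preimage_univ,
    surfaceMeasure, withDensity_apply _ .univ, Measure.restrict_univ,
    ← surfaceMeasure_apply isClosed_frontier.measurableSet subset_rfl]
  exact hle.trans_lt (ENNReal.mul_lt_top ENNReal.ofReal_lt_top
    (hν.hausdorffMeasure_frontier_ne_top hK hm).lt_top)

theorem integral_mul_div_inner_coneVolume (hν : IsNormalSelection K ν) (hK : IsOriginBody K)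
    (hm : Module.finrank ℝ E = m + 1) (hκ : IsConeRatio E m κ) (hω : IsWeight ω)
    (hf : Measurable f) :
    ∫ y, ω y * (f (ν y) / ⟪y, ν y⟫) ∂coneVolume K =
      κ.toReal * ∫ v, f v ∂weightedSurfaceAreaMeasure m K ν ω := by
  have hpos : ∀ x ∈ frontier K, 0 < ⟪x, ν x⟫ := fun x hx =>
    hK.inner_pos_of_isOuterNormal (hν.norm_eq_one x) (hν.isOuterNormal x hx)
  have hmeas : Measurable fun x => ⟪x, ν x⟫ := measurable_id.inner hν.measurable
  rw [hν.coneVolume_eq_smul_surfaceMeasure hK hm hκ, integral_smul_measure, smul_eq_mul,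
    integral_surfaceMeasure hmeas fun x hx => (hpos x hx).le,
    weightedSurfaceAreaMeasure, integral_map hν.measurable.aemeasurable hf.aestronglyMeasurable,
    integral_surfaceMeasure hω.measurable fun x hx => (hω.pos x (hK.ne_zero_of_mem_frontier hx)).le]
  congr 1
  refine setIntegral_congr_fun isClosed_frontier.measurableSet fun x hx => ?_
  have := (hpos x hx).ne'
  field_simp

theorem weightedSurfaceAreaMeasure_ne_zero (hν : IsNormalSelection K ν) (hK : IsOriginBody K)
    (hm : Module.finrank ℝ E = m + 1) (hω : IsWeight ω) :
    weightedSurfaceAreaMeasure m K ν ω ≠ 0 := by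
  obtain ⟨κ, -, -, hκ⟩ := exists_isConeRatio hm
  rw [weightedSurfaceAreaMeasure, Ne, Measure.map_eq_zero_iff hν.measurable.aemeasurable,
    surfaceMeasure_eq_zero_iff hω.measurable fun x hx => hω.pos x (hK.ne_zero_of_mem_frontier hx),
    ← surfaceMeasure_eq_zero_iff (g := fun x => ⟪x, ν x⟫) (measurable_id.inner hν.measurable)
      fun x hx => hK.inner_pos_of_isOuterNormal (hν.norm_eq_one x) (hν.isOuterNormal x hx)]
  intro hzero
  have hvol : volume K = 0 := by
    simpa [hν.coneVolume_eq_smul_surfaceMeasure hK hm hκ, hzero] using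
      (hK.coneVolume_apply .univ).symm
  exact (Measure.measure_pos_of_mem_nhds volume hK.mem_nhds_zero).ne' hvol

theorem map_neg_weightedSurfaceAreaMeasure (hν : IsNormalSelection K ν) (hK : IsOriginBody K)
    (hKneg : K = -K) (hm : Module.finrank ℝ E = m + 1) (hω : ∀ x, ω (-x) = ω x) :
    (weightedSurfaceAreaMeasure m K ν ω).map Neg.neg = weightedSurfaceAreaMeasure m K ν ω := by
  have hae : (fun x => -ν x) =ᵐ[surfaceMeasure m K ω] fun x => ν (-x) := by
    refine (withDensity_absolutelyContinuous _ _).ae_le ((ae_restrict_iff'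
      isClosed_frontier.measurableSet).2 ?_)
    filter_upwards [measure_eq_zero_iff_ae_notMem.1
      (hK.hausdorffMeasure_frontier_sdiff_regularBoundary hm)] with x hx hxK
    exact (hν.apply_neg_of_mem_regularBoundary hK hKneg (by simpa [hxK] using hx)).symm
  calc (weightedSurfaceAreaMeasure m K ν ω).map Neg.neg
      = (surfaceMeasure m K ω).map fun x => -ν x := Measure.map_map measurable_neg hν.measurable
    _ = (surfaceMeasure m K ω).map fun x => ν (-x) := Measure.map_congr hae
    _ = ((surfaceMeasure m K ω).map Neg.neg).map ν :=
      (Measure.map_map hν.measurable measurable_neg).symm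
    _ = weightedSurfaceAreaMeasure m K ν ω := by
      rw [map_neg_surfaceMeasure hKneg hω, weightedSurfaceAreaMeasure]

end IsNormalSelection

theorem IsOriginBody.exists_eventually_le_inv_mul_integral_wulffShape (hK : IsOriginBody K)
    (hω : IsWeight ω) (hf : Continuous f) (m : ℕ) :
    ∃ b, ∀ᶠ t in 𝓝[>] (0 : ℝ), ∀ y ∈ frontier K, b ≤ t⁻¹ *
      ∫ r in 1..(gauge (wulffShape fun v => supportFun K v + t * f v) y)⁻¹,
        ω (r • y) ∂radialMeasure m := by
  obtain ⟨r, hr, hrK⟩ := nhds_basis_closedBall.mem_iff.1 hK.mem_nhds_zero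
  obtain ⟨C, hC⟩ := (isCompact_sphere (0 : E) 1).exists_bound_of_continuousOn hf.continuousOn
  obtain ⟨B, hB⟩ := hω.exists_le_integral_radialMeasure
    (hK.isCompact.of_isClosed_subset isClosed_frontier hK.frontier_subset)
    (fun h0 => hK.ne_zero_of_mem_frontier h0 rfl) m
  have hC' : ∀ v, ‖v‖ = 1 → |f v| ≤ |C| := fun v hv =>
    (hC v (by simpa using hv)).trans (le_abs_self C)
  have hsmall : ∀ᶠ t in 𝓝 (0 : ℝ), t * (|C| / r) < 1 / 2 :=
    ContinuousAt.eventually_lt (by fun_prop) continuousAt_const (by norm_num)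
  refine ⟨-B * (|C| / r), ?_⟩
  filter_upwards [self_mem_nhdsWithin, hsmall.filter_mono nhdsWithin_le_nhds,
    (hK.eventually_isOriginBody_wulffShape hf).filter_mono nhdsWithin_le_nhds]
    with t ht htC hW y hy
  rw [mem_Ioi] at ht
  have hy0 := hK.ne_zero_of_mem_frontier hy
  have hpos : 0 ≤ t * (|C| / r) := by positivity
  have hmem := smul_mem_wulffShape_supportFun_add hK.isCompact hr hrK hC' ht.le
    (by rw [← mul_div_assoc, div_lt_iff₀ hr] at htC; linarith) (hK.frontier_subset hy)
  rw [hW.smul_mem_iff (by linarith) hy0] at hmem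
  rw [le_inv_mul_iff₀ ht]
  calc t * (-B * (|C| / r)) = -B * (1 - (1 - t * (|C| / r))) := by ring
    _ ≤ ∫ r in 1..(1 - t * (|C| / r)), ω (r • y) ∂radialMeasure m :=
      hB y hy _ ⟨by linarith, by linarith⟩
    _ ≤ _ := hω.monotoneOn_integral_radialMeasure hy0 (mem_Ioi.2 (by linarith))
      (mem_Ioi.2 (inv_pos.2 (hW.gauge_pos hy0))) hmem

theorem IsNormalSelection.eventually_lt_inv_mul_integral_wulffShape (hν : IsNormalSelection K ν)
    (hK : IsOriginBody K) (hω : IsWeight ω) (hf : Continuous f) (hy : y ∈ regularBoundary K)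
    {b : ℝ} (hb : b < (m + 1) * (ω y * (f (ν y) / ⟪y, ν y⟫))) :
    ∀ᶠ t in 𝓝[>] (0 : ℝ), b < t⁻¹ *
      ∫ r in 1..(gauge (wulffShape fun v => supportFun K v + t * f v) y)⁻¹,
        ω (r • y) ∂radialMeasure m := by
  have hy0 := hK.ne_zero_of_mem_frontier hy.1
  have hωy := hω.pos y hy0
  obtain ⟨a, hba, ha⟩ : ∃ a, b < (m + 1) * ω y * a ∧ a < f (ν y) / ⟪y, ν y⟫ := by
    rw [← mul_assoc, ← div_lt_iff₀' (by positivity)] at hb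
    obtain ⟨a, hba, ha⟩ := exists_between hb
    exact ⟨a, (div_lt_iff₀' (by positivity)).1 hba, ha⟩
  have hpos : ∀ᶠ t in 𝓝 (0 : ℝ), 0 < 1 + t * a :=
    continuousAt_const.eventually_lt (by fun_prop) (by norm_num)
  filter_upwards [self_mem_nhdsWithin, hpos.filter_mono nhdsWithin_le_nhds,
    (hK.eventually_isOriginBody_wulffShape hf).filter_mono nhdsWithin_le_nhds,
    hK.eventually_smul_mem_wulffShape hf hy (hν.norm_eq_one y) (hν.isOuterNormal y hy.1) ha,
    (hω.tendsto_inv_mul_integral_radialMeasure hy0 a).eventually_const_lt hba]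
    with t ht hta hW hmem hlt
  rw [hW.smul_mem_iff hta.le hy0] at hmem
  refine hlt.trans_le (mul_le_mul_of_nonneg_left ?_ (inv_nonneg.2 (le_of_lt ht)))
  exact hω.monotoneOn_integral_radialMeasure hy0 hta
    (mem_Ioi.2 (inv_pos.2 (hW.gauge_pos hy0))) hmem

theorem IsNormalSelection.eventually_integral_lt_integral_wulffShape
    (hν : IsNormalSelection K ν) (hK : IsOriginBody K) (hm : Module.finrank ℝ E = m + 1)
    (hω : IsWeight ω) (hf : Continuous f)
    (hpos : 0 < ∫ v, f v ∂weightedSurfaceAreaMeasure m K ν ω) :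
    ∀ᶠ t in 𝓝[>] (0 : ℝ),
      ∫ x in K, ω x < ∫ x in wulffShape fun v => supportFun K v + t * f v, ω x := by
  have : Nontrivial E := Module.nontrivial_of_finrank_pos (R := ℝ) (by lia)
  have := hK.isFiniteMeasure_coneVolume
  obtain ⟨κ, hκ0, hκtop, hκ⟩ := exists_isConeRatio hm
  have hbody : ∀ᶠ t in 𝓝[>] 0, IsOriginBody (wulffShape fun v => supportFun K v + t * f v) :=
    (hK.eventually_isOriginBody_wulffShape hf).filter_mono nhdsWithin_le_nhds
  obtain ⟨b, hb⟩ := hK.exists_eventually_le_inv_mul_integral_wulffShape hω hf m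
  have hlim : 0 < ∫ y, (m + 1) * (ω y * (f (ν y) / ⟪y, ν y⟫)) ∂coneVolume K := by
    rw [integral_const_mul, hν.integral_mul_div_inner_coneVolume hK hm hκ hω hf.measurable]
    have := ENNReal.toReal_pos hκ0 hκtop
    positivity
  have hev := eventually_lt_integral_of_ae_eventually_lt (l := 𝓝[>] (0 : ℝ)) (b := b)
    (hbody.mono fun t hW => (hK.integrable_and_integral_sub_eq hW hm hω.integrable).1.const_mul t⁻¹)
    (.of_integral_ne_zero hlim.ne')
    (hb.mono fun t ht => hK.ae_mem_frontier_coneVolume.mono ht)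
    (hK.ae_mem_regularBoundary_coneVolume.mono fun y hy b =>
      hν.eventually_lt_inv_mul_integral_wulffShape hK hω hf hy) hlim
  filter_upwards [hev, hbody, self_mem_nhdsWithin] with t ht hW ht0
  rw [integral_const_mul, ← (hK.integrable_and_integral_sub_eq hW hm hω.integrable).2] at ht
  exact sub_pos.1 (pos_of_mul_pos_right ht (inv_nonneg.2 (le_of_lt ht0)))

end Variation

/-! ### Scaling bodies to a prescribed weighted volume -/

section Scaling

variable {E : Type*} [NormedAddCommGroup E] [InnerProductSpace ℝ E] {L : Set E}

theorem IsOriginBody.smul (hL : IsOriginBody L) {s : ℝ} (hs : 0 < s) :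
    IsOriginBody (s • L) where
  isCompact := hL.isCompact.smul s
  convex := hL.convex.smul s
  zero_mem_interior := by
    rw [interior_smul₀ hs.ne']
    exact zero_mem_smul_set hL.zero_mem_interior

theorem IsOriginBody.smul_eq_setOf_gauge_le (hL : IsOriginBody L) {s : ℝ}
    (hs : 0 < s) : s • L = {x | gauge L x ≤ s} := by
  ext x
  rw [mem_smul_set_iff_inv_smul_mem₀ hs.ne', hL.mem_iff_gauge_le_one,
    gauge_smul_of_nonneg (inv_nonneg.2 hs.le), smul_eq_mul, inv_mul_le_one₀ hs, mem_ofPred_eq]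

variable [MeasurableSpace E] [BorelSpace E] [FiniteDimensional ℝ E] {m : ℕ} {ω : E → ℝ}

theorem IsOriginBody.volume_gauge_eq (hL : IsOriginBody L) (hm : Module.finrank ℝ E = m + 1)
    (s : ℝ) : volume {x | gauge L x = s} = 0 := by
  have := hL.isFiniteMeasure_coneVolume
  have hs : radialMeasure m {s} = 0 :=
    withDensity_absolutelyContinuous _ _ (Measure.absolutelyContinuous_restrict (by simp))
  have hmap := congrArg (· (univ ×ˢ {s})) (hL.map_radialProj_gauge_volume hm)
  simp only [Measure.prod_prod, hs, mul_zero] at hmap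
  rw [Measure.map_apply (hL.measurable_radialProj.prodMk hL.continuous_gauge.measurable)
    (MeasurableSet.univ.prod (measurableSet_singleton s))] at hmap
  simpa [preimage] using hmap

theorem IsOriginBody.exists_setIntegral_smul_eq (hL : IsOriginBody L)
    (hm : Module.finrank ℝ E = m + 1) (hω : Integrable ω) {c : ℝ} (hc : 0 < c)
    (hcL : c < ∫ x in L, ω x) : ∃ s ∈ Ioo (0 : ℝ) 1, ∫ x in s • L, ω x = c := by
  have hcont := continuous_setIntegral_le hL.continuous_gauge.measurable
    (hL.volume_gauge_eq hm) hω
  have hzero : ∫ x in {x | gauge L x ≤ 0}, ω x = 0 := setIntegral_measure_zero _ <| by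
    simpa only [(gauge_nonneg _).ge_iff_eq'] using hL.volume_gauge_eq hm 0
  have hone : {x | gauge L x ≤ 1} = L := by simpa using (hL.smul_eq_setOf_gauge_le one_pos).symm
  obtain ⟨s, hs, hsc⟩ := intermediate_value_Ioo zero_le_one hcont.continuousOn
    (by rw [hzero, hone]; exact ⟨hc, hcL⟩)
  exact ⟨s, hs, by rw [hL.smul_eq_setOf_gauge_le hs.1]; exact hsc⟩

end Scaling

/-! ### The first-order condition -/

section Minimizer

variable {E : Type*} [NormedAddCommGroup E] [InnerProductSpace ℝ E] [MeasurableSpace E]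
  [BorelSpace E] {K η : Set E} {ν : E → E} {ω f : E → ℝ} {m : ℕ}
  {μ : Measure E} {p : ℝ}

theorem IsOriginBody.measurable_ofReal_supportFun_rpow (hK : IsOriginBody K) (s : ℝ) :
    Measurable fun v => ENNReal.ofReal (supportFun K v ^ s) :=
  (hK.continuous_supportFun.measurable.pow_const s).ennreal_ofReal

variable [FiniteDimensional ℝ E]

/-- `K` solves the Minkowski optimization problem: it minimizes `L ↦ ∫ h_L ^ p / p ∂μ` among
origin-symmetric convex bodies with the same integral of `ω`. The factor `1 / p` makes the problem
a minimization for `p < 0` as well. -/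
def IsMinkowskiMinimizer (μ : Measure E) (ω : E → ℝ) (p : ℝ) (K : Set E) : Prop :=
  ∀ L, IsOriginBody L → L = -L → ∫ x in L, ω x = ∫ x in K, ω x →
    ∫ v, supportFun K v ^ p / p ∂μ ≤ ∫ v, supportFun L v ^ p / p ∂μ

theorem IsWeight.setIntegral_pos (hω : IsWeight ω) (hm : Module.finrank ℝ E = m + 1)
    (hK : K ∈ 𝓝 0) : 0 < ∫ x in K, ω x := by
  have : Nontrivial E := Module.nontrivial_of_finrank_pos (R := ℝ) (by lia)
  have hsub : K \ {0} ⊆ Function.support ω ∩ K := fun x hx => ⟨(hω.pos x hx.2).ne', hx.1⟩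
  have hnonneg : ∀ᵐ x ∂volume.restrict K, 0 ≤ ω x := ae_restrict_of_ae <| by
    filter_upwards [compl_mem_ae_iff.2 (measure_singleton (0 : E))] with x hx
    exact (hω.pos x hx).le
  rw [setIntegral_pos_iff_support_of_nonneg_ae hnonneg hω.integrable.integrableOn]
  calc 0 < volume K := Measure.measure_pos_of_mem_nhds volume hK
    _ = volume (K \ {0}) := (measure_sdiff_null (measure_singleton 0)).symm
    _ ≤ _ := measure_mono hsub

theorem IsMinkowskiMinimizer.eventually_integral_le (hmin : IsMinkowskiMinimizer μ ω p K)
    (hK : IsOriginBody K) (hKneg : K = -K) (hν : IsNormalSelection K ν)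
    (hm : Module.finrank ℝ E = m + 1) (hω : IsWeight ω) [IsFiniteMeasure μ]
    (hμ : ∀ᵐ v ∂μ, ‖v‖ = 1) (hf : Continuous f) (hfeven : ∀ v, f (-v) = f v)
    (hpos : 0 < ∫ v, f v ∂weightedSurfaceAreaMeasure m K ν ω) :
    ∀ᶠ t in 𝓝[>] (0 : ℝ), ∫ v, supportFun K v ^ p / p ∂μ ≤
      ∫ v, (supportFun K v + t * f v) ^ p / p ∂μ := by
  obtain ⟨r, R, hr, -, hrR⟩ := hK.exists_supportFun_mem_Icc
  obtain ⟨C, hC⟩ := (isCompact_sphere (0 : E) 1).exists_bound_of_continuousOn hf.continuousOn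
  have hsmall : ∀ᶠ t in 𝓝 (0 : ℝ), |t| < r / (2 * (|C| + 1)) :=
    continuousAt_id.abs.eventually_lt continuousAt_const (by simpa using by positivity)
  filter_upwards [hν.eventually_integral_lt_integral_wulffShape hK hm hω hf hpos,
    (hK.eventually_isOriginBody_wulffShape hf).filter_mono nhdsWithin_le_nhds,
    hsmall.filter_mono nhdsWithin_le_nhds] with t hlt hW ht
  obtain ⟨s, hs, hsK⟩ := hW.exists_setIntegral_smul_eq hm hω.integrable
    (hω.setIntegral_pos hm hK.mem_nhds_zero) hlt
  have heven : ∀ v, supportFun K (-v) + t * f (-v) = supportFun K v + t * f v := fun v => by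
    rw [supportFun_neg_right, ← hKneg, hfeven]
  have hL := hW.smul hs.1
  obtain ⟨r', R', hr', -, hrR'⟩ := hL.exists_supportFun_mem_Icc
  refine (hmin _ hL (by rw [← Set.smul_set_neg, neg_wulffShape heven]) hsK).trans ?_
  refine integral_mono_ae ?_ ?_ ?_
  · exact (integrable_rpow_of_ae_mem_Icc hr' hL.continuous_supportFun.aestronglyMeasurable
      (hμ.mono hrR') p).div_const p
  · exact (integrable_rpow_of_ae_mem_Icc (half_pos hr)
      (hK.continuous_supportFun.add (hf.const_mul t)).aestronglyMeasurable
      (hμ.mono fun v hv => add_mul_mem_Icc_half hr (hrR v hv) (hC v (by simpa using hv)) ht)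
      p).div_const p
  · filter_upwards [hμ] with v hv
    exact rpow_div_le_rpow_div (hr'.trans_le (hrR' v hv).1)
      (supportFun_smul_wulffShape_le hW.isCompact hW.zero_mem (Ioo_subset_Icc_self hs) hv) p

theorem IsMinkowskiMinimizer.integral_mul_rpow_nonneg (hmin : IsMinkowskiMinimizer μ ω p K)
    (hp : p ≠ 0) (hK : IsOriginBody K) (hKneg : K = -K) (hν : IsNormalSelection K ν)
    (hm : Module.finrank ℝ E = m + 1) (hω : IsWeight ω) [IsFiniteMeasure μ]
    (hμ : ∀ᵐ v ∂μ, ‖v‖ = 1) (hf : Continuous f) (hfeven : ∀ v, f (-v) = f v)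
    (hpos : 0 < ∫ v, f v ∂weightedSurfaceAreaMeasure m K ν ω) :
    0 ≤ ∫ v, f v * supportFun K v ^ (p - 1) ∂μ := by
  obtain ⟨r, R, hr, -, hrR⟩ := hK.exists_supportFun_mem_Icc
  obtain ⟨C, hC⟩ := (isCompact_sphere (0 : E) 1).exists_bound_of_continuousOn hf.continuousOn
  have hcont := hK.continuous_supportFun
  have hderiv := hasDerivAt_integral_add_mul_rpow_div (μ := μ) hr hp hcont.aestronglyMeasurable
    hf.aestronglyMeasurable (hμ.mono hrR) (hμ.mono fun v hv => hC v (by simpa using hv))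
  refine ge_of_tendsto hderiv.tendsto_slope_zero_right ?_
  filter_upwards [hmin.eventually_integral_le hK hKneg hν hm hω hμ hf hfeven hpos,
    self_mem_nhdsWithin] with t ht ht0
  simp only [zero_add, zero_mul, add_zero, smul_eq_mul]
  exact mul_nonneg (inv_nonneg.2 (le_of_lt ht0)) (sub_nonneg.2 ht)

theorem IsMinkowskiMinimizer.exists_withDensity_eq_smul (hmin : IsMinkowskiMinimizer μ ω p K)
    (hp : p ≠ 0) (hK : IsOriginBody K) (hKneg : K = -K) (hν : IsNormalSelection K ν)
    (hm : Module.finrank ℝ E = m + 1) (hω : IsWeight ω) (hωeven : ∀ x, ω (-x) = ω x)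
    [IsFiniteMeasure μ] (hμ : ∀ᵐ v ∂μ, ‖v‖ = 1) (hμeven : μ.map Neg.neg = μ) :
    ∃ c : NNReal, μ.withDensity (fun v => ENNReal.ofReal (supportFun K v ^ (p - 1))) =
      c • weightedSurfaceAreaMeasure m K ν ω := by
  obtain ⟨r, R, hr, -, hrR⟩ := hK.exists_supportFun_mem_Icc
  have := hν.isFiniteMeasure_weightedSurfaceAreaMeasure hK hm hω
  have := isFiniteMeasure_withDensity_ofReal (integrable_rpow_of_ae_mem_Icc (μ := μ) hr
    hK.continuous_supportFun.aestronglyMeasurable (hμ.mono hrR) (p - 1)).2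
  refine exists_eq_smul_of_integral_nonneg_of_even ?_
    (hν.map_neg_weightedSurfaceAreaMeasure hK hKneg hm hωeven)
    (hν.weightedSurfaceAreaMeasure_ne_zero hK hm hω) fun f hfeven hpos => ?_
  · exact map_withDensity_of_comp_eq ⟨measurable_neg, hμeven⟩
      (Homeomorph.neg E).measurableEmbedding fun v => by rw [supportFun_neg_right, ← hKneg]
  · rw [integral_withDensity_eq_integral_toReal_smul
      (hK.measurable_ofReal_supportFun_rpow _) (.of_forall fun _ => ENNReal.ofReal_lt_top)]
    refine (hmin.integral_mul_rpow_nonneg hp hK hKneg hν hm hω hμ f.continuous hfeven hpos).trans_eq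
      (integral_congr_ae ?_)
    filter_upwards [hμ] with v hv
    rw [ENNReal.toReal_ofReal (Real.rpow_nonneg (hr.le.trans (hrR v hv).1) _), smul_eq_mul,
      mul_comm]

theorem IsNormalSelection.setLIntegral_weightedSurfaceAreaMeasure (hν : IsNormalSelection K ν)
    (hK : IsOriginBody K) (hω : IsWeight ω) (p : ℝ) (hη : MeasurableSet η) :
    ∫⁻ v in η, ENNReal.ofReal (supportFun K v ^ (1 - p)) ∂weightedSurfaceAreaMeasure m K ν ω =
      ∫⁻ x in frontier K ∩ ν ⁻¹' η, ENNReal.ofReal (⟪x, ν x⟫ ^ (1 - p) * ω x) ∂μH[m] := by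
  have hmeas := hK.measurable_ofReal_supportFun_rpow (1 - p)
  rw [weightedSurfaceAreaMeasure, setLIntegral_map hη hmeas hν.measurable, surfaceMeasure,
    setLIntegral_withDensity_eq_setLIntegral_mul (g := fun x => ENNReal.ofReal _) _
      hω.measurable.ennreal_ofReal (hmeas.comp hν.measurable) (hν.measurable hη),
    Measure.restrict_restrict (hν.measurable hη), inter_comm]
  refine setLIntegral_congr_fun
    (isClosed_frontier.measurableSet.inter (hν.measurable hη)) fun x hx => ?_
  simp only [Pi.mul_apply]
  rw [(hν.isOuterNormal x hx.1).supportFun_eq hK.isCompact (hK.frontier_subset hx.1), mul_comm,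
    ENNReal.ofReal_mul]
  exact Real.rpow_nonneg
    (hK.inner_pos_of_isOuterNormal (hν.norm_eq_one x) (hν.isOuterNormal x hx.1)).le _

theorem IsMinkowskiMinimizer.exists_measure_eq_mul_lintegral (hmin : IsMinkowskiMinimizer μ ω p K)
    (hp : p ≠ 0) (hK : IsOriginBody K) (hKneg : K = -K) (hν : IsNormalSelection K ν)
    (hm : Module.finrank ℝ E = m + 1) (hω : IsWeight ω) (hωeven : ∀ x, ω (-x) = ω x)
    [IsFiniteMeasure μ] (hμ : ∀ᵐ v ∂μ, ‖v‖ = 1) (hμeven : μ.map Neg.neg = μ) :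
    ∃ c : NNReal, ∀ η, MeasurableSet η → μ η =
      c * ∫⁻ x in frontier K ∩ ν ⁻¹' η, ENNReal.ofReal (⟪x, ν x⟫ ^ (1 - p) * ω x) ∂μH[m] := by
  obtain ⟨r, R, hr, -, hrR⟩ := hK.exists_supportFun_mem_Icc
  have hmeas := hK.measurable_ofReal_supportFun_rpow
  obtain ⟨c, hc⟩ :=
    hmin.exists_withDensity_eq_smul hp hK hKneg hν hm hω hωeven hμ hμeven
  refine ⟨c, fun η hη => ?_⟩
  calc μ η = ∫⁻ v in η, ENNReal.ofReal (supportFun K v ^ (p - 1)) *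
          ENNReal.ofReal (supportFun K v ^ (1 - p)) ∂μ := by
        rw [← setLIntegral_one]
        refine lintegral_congr_ae (ae_restrict_of_ae (hμ.mono fun v hv => ?_))
        have hpos := hr.trans_le (hrR v hv).1
        simp only
        rw [← ENNReal.ofReal_mul (by positivity), ← Real.rpow_add hpos]
        simp
    _ = ∫⁻ v in η, ENNReal.ofReal (supportFun K v ^ (1 - p))
          ∂μ.withDensity fun v => ENNReal.ofReal (supportFun K v ^ (p - 1)) :=
        (setLIntegral_withDensity_eq_setLIntegral_mul _ (hmeas (p - 1)) (hmeas (1 - p)) hη).symm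
    _ = _ := by
        rw [hc, Measure.restrict_smul, lintegral_smul_measure,
          hν.setLIntegral_weightedSurfaceAreaMeasure hK hω p hη]
        rfl

end Minimizer

/-! ### The Gaussian dual Minkowski problem -/

theorem isWeight_exp_mul_rpow {E : Type*} [NormedAddCommGroup E] [InnerProductSpace ℝ E]
    [MeasurableSpace E] [BorelSpace E] [FiniteDimensional ℝ E] [Nontrivial E] {q : ℝ}
    (hq : 0 < q) :
    IsWeight fun x : E => Real.exp (-‖x‖ ^ 2 / 2) * ‖x‖ ^ (q - Module.finrank ℝ E) where
  continuousOn := .mul (by fun_prop) <|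
    continuousOn_id.norm.rpow_const fun x hx => .inl (norm_ne_zero_iff.2 hx)
  pos x hx := by
    have := norm_pos_iff.2 hx
    positivity
  integrable := by
    refine (integrable_fun_norm_addHaar volume
      (f := fun r => Real.exp (-r ^ 2 / 2) * r ^ (q - Module.finrank ℝ E))).2 ?_
    refine (integrableOn_rpow_mul_exp_neg_mul_sq (b := 1 / 2) (s := q - 1) (by norm_num)
      (by linarith)).congr_fun (fun r hr => ?_) measurableSet_Ioi
    rw [mem_Ioi] at hr
    have hdim : 1 ≤ Module.finrank ℝ E := Module.finrank_pos
    have hpow : r ^ (q - 1) = r ^ (Module.finrank ℝ E - 1) * r ^ (q - Module.finrank ℝ E) := by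
      rw [← Real.rpow_natCast, ← Real.rpow_add hr, Nat.cast_sub hdim]
      ring_nf
    simp only [hpow, smul_eq_mul]
    ring_nf

theorem isMinkowskiMinimizer_of_phiFunc_le {n : ℕ} {p q : ℝ}
    {μ : Measure (EuclideanSpace ℝ (Fin n))} {K₀ : Set (EuclideanSpace ℝ (Fin n))}
    (hμ : 0 < (μ univ).toReal)
    (hV₀ : gaussDualQuermass n q K₀ = (μ univ).toReal)
    (hmax : ∀ K : Set (EuclideanSpace ℝ (Fin n)),
      (IsCompact K ∧ Convex ℝ K ∧ (0 : EuclideanSpace ℝ (Fin n)) ∈ interior K ∧ K = -K) →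
      gaussDualQuermass n q K = (μ univ).toReal → PhiFunc n p μ K ≤ PhiFunc n p μ K₀) :
    IsMinkowskiMinimizer μ (fun x => Real.exp (-‖x‖ ^ 2 / 2) * ‖x‖ ^ (q - n)) p K₀ := by
  have hPhi : ∀ K, PhiFunc n p μ K = -((μ univ).toReal⁻¹ * ∫ v, supportFun K v ^ p / p ∂μ) := by
    intro K
    rw [integral_div, PhiFunc]
    change _ * ∫ v, supportFun K v ^ p ∂μ = _
    ring
  intro L hL hLneg hVL
  have hle := hmax L ⟨hL.isCompact, hL.convex, hL.zero_mem_interior, hLneg⟩ (hVL.trans hV₀)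
  rw [hPhi, hPhi, neg_le_neg_iff] at hle
  exact le_of_mul_le_mul_left hle (inv_pos.2 hμ)

theorem optimizer_solves_minkowski_general (n : ℕ) (p q : ℝ) (hp : p ≠ 0) (hq : 0 < q)
    (μ : Measure (EuclideanSpace ℝ (Fin n))) (hμfin : IsFiniteMeasure μ) (hμne : μ ≠ 0)
    (hμsph : μ (sphere (0 : EuclideanSpace ℝ (Fin n)) 1)ᶜ = 0)
    (hμeven : μ.map (fun x => -x) = μ)
    (K₀ : Set (EuclideanSpace ℝ (Fin n)))
    (hK₀ : IsCompact K₀ ∧ Convex ℝ K₀ ∧ (0 : EuclideanSpace ℝ (Fin n)) ∈ interior K₀ ∧ K₀ = -K₀)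
    (hV₀ : gaussDualQuermass n q K₀ = (μ Set.univ).toReal)
    (hmax : ∀ K : Set (EuclideanSpace ℝ (Fin n)),
      (IsCompact K ∧ Convex ℝ K ∧ (0 : EuclideanSpace ℝ (Fin n)) ∈ interior K ∧ K = -K) →
      gaussDualQuermass n q K = (μ Set.univ).toReal →
      PhiFunc n p μ K ≤ PhiFunc n p μ K₀) :
    ∀ ν : EuclideanSpace ℝ (Fin n) → EuclideanSpace ℝ (Fin n),
      Measurable ν →
      (∀ x, ν x ∈ sphere (0 : EuclideanSpace ℝ (Fin n)) 1) →
      (∀ x ∈ frontier K₀, ∀ y ∈ K₀, ⟪y, ν x⟫ ≤ ⟪x, ν x⟫) →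
        ∀ η : Set (EuclideanSpace ℝ (Fin n)), MeasurableSet η →
            μ η * lpGaussDualCurv n p q K₀ ν (sphere (0 : EuclideanSpace ℝ (Fin n)) 1) =
              μ Set.univ * lpGaussDualCurv n p q K₀ ν η := by
  intro ν hνm hνs hνn η hη
  have hμ : ∀ᵐ v ∂μ, ‖v‖ = 1 := by simpa [ae_iff, sphere, compl_def] using hμsph
  obtain ⟨v, hv⟩ : ∃ v : EuclideanSpace ℝ (Fin n), ‖v‖ = 1 := by
    have := ae_neBot.2 hμne
    exact hμ.exists
  obtain ⟨m, rfl⟩ : ∃ m, n = m + 1 := Nat.exists_eq_succ_of_ne_zero <| by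
    rintro rfl
    simp [Subsingleton.elim v 0] at hv
  have hdim : Module.finrank ℝ (EuclideanSpace ℝ (Fin (m + 1))) = m + 1 :=
    finrank_euclideanSpace_fin
  have hK : IsOriginBody K₀ := ⟨hK₀.1, hK₀.2.1, hK₀.2.2.1⟩
  have hν : IsNormalSelection K₀ ν := ⟨hνm, fun x => by simpa using hνs x, hνn⟩
  have hω := isWeight_exp_mul_rpow (E := EuclideanSpace ℝ (Fin (m + 1))) hq
  rw [hdim] at hω
  have hμpos : 0 < (μ univ).toReal := ENNReal.toReal_pos (by simpa using hμne) (measure_ne_top _ _)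
  have hmin := isMinkowskiMinimizer_of_phiFunc_le hμpos hV₀ hmax
  obtain ⟨c, hc⟩ := hmin.exists_measure_eq_mul_lintegral hp hK hK₀.2.2.2 hν hdim hω
    (fun x => by simp only [norm_neg]) hμ hμeven
  have hcurv : ∀ η, MeasurableSet η → μ η = c * lpGaussDualCurv (m + 1) p q K₀ ν η := by
    intro η hη
    rw [hc η hη, lpGaussDualCurv]
    simp only [Nat.cast_add, Nat.cast_one, add_sub_cancel_right, mul_assoc, mul_comm]
  have hS : μ univ = μ (sphere 0 1) := by
    rw [← measure_add_measure_compl isClosed_sphere.measurableSet, hμsph, add_zero]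
  rw [hS, hcurv η hη, hcurv _ isClosed_sphere.measurableSet]
  ring

theorem optimizer_solves_minkowski (n : ℕ) (hn : 2 ≤ n) (p q : ℝ) (hp : 1 < p) (hq : 1 < q)
    (μ : Measure (EuclideanSpace ℝ (Fin n))) (hμfin : IsFiniteMeasure μ) (hμne : μ ≠ 0)
    (hμsph : μ (sphere (0 : EuclideanSpace ℝ (Fin n)) 1)ᶜ = 0)
    (hμeven : μ.map (fun x => -x) = μ)
    (K₀ : Set (EuclideanSpace ℝ (Fin n)))
    (hK₀ : IsCompact K₀ ∧ Convex ℝ K₀ ∧ (0 : EuclideanSpace ℝ (Fin n)) ∈ interior K₀ ∧ K₀ = -K₀)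
    (hV₀ : gaussDualQuermass n q K₀ = (μ Set.univ).toReal)
    (hmax : ∀ K : Set (EuclideanSpace ℝ (Fin n)),
      (IsCompact K ∧ Convex ℝ K ∧ (0 : EuclideanSpace ℝ (Fin n)) ∈ interior K ∧ K = -K) →
      gaussDualQuermass n q K = (μ Set.univ).toReal →
      PhiFunc n p μ K ≤ PhiFunc n p μ K₀) :
    ∀ ν : EuclideanSpace ℝ (Fin n) → EuclideanSpace ℝ (Fin n),
      Measurable ν →
      (∀ x, ν x ∈ sphere (0 : EuclideanSpace ℝ (Fin n)) 1) →
      (∀ x ∈ frontier K₀, ∀ y ∈ K₀, ⟪y, ν x⟫ ≤ ⟪x, ν x⟫) →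
        ∀ η : Set (EuclideanSpace ℝ (Fin n)),
          η ⊆ sphere (0 : EuclideanSpace ℝ (Fin n)) 1 → MeasurableSet η →
            μ η * lpGaussDualCurv n p q K₀ ν (sphere (0 : EuclideanSpace ℝ (Fin n)) 1) =
              μ Set.univ * lpGaussDualCurv n p q K₀ ν η :=
  fun ν hνm hνs hνn η _ hη => optimizer_solves_minkowski_general n p q
    (zero_lt_one.trans hp).ne' (zero_lt_one.trans hq) μ hμfin hμne hμsph hμeven K₀ hK₀ hV₀ hmax
    ν hνm hνs hνn η hη
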